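/- arXiv:1412.6406 — 5 statements merged into one kernel-verified Lean document; each statement's English description precedes it below -/
import Mathlib

section
/- Let ε > 0 and let s_0 > s_1 ≥ 0. Then there exists a classical abstract Swiss cheese A = ((a_n, r_n)) with a_0 = a_1, r_0 = s_0, r_1 = s_1 and ρ_ann(A) = ∑_{n ≥ 2} r_n < ε, such that R(X_A) has no non-zero bounded point derivation at any point of X_A. -/
open Metric Set

/-- `R₀(X)`: the restrictions to `X` of rational functions with poles off `X`, i.e. quotients
`p/q` of complex polynomials with `q` nonvanishing on `X`. -/
def R0set (X : Set ℂ) : Set C(X, ℂ) :=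
  {f | ∃ p q : Polynomial ℂ, (∀ x : X, q.eval (x : ℂ) ≠ 0) ∧
    ∀ x : X, f x = p.eval (x : ℂ) / q.eval (x : ℂ)}

/-- `R(X)`: the uniform closure in `C(X, ℂ)` of the rational functions with poles off `X`.
(On the compact space `X` the topology of `C(X, ℂ)` is that of uniform convergence.) -/
noncomputable def Rx (X : Set ℂ) [CompactSpace X] : Subalgebra ℂ C(X, ℂ) :=
  (Algebra.adjoin ℂ (R0set X)).topologicalClosure

/-- A bounded point derivation on `R(X)` at `x`: a continuous linear functional `d` on `R(X)`
satisfying `d(fg) = f(x)d(g) + d(f)g(x)` for all `f, g ∈ R(X)`. -/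
def IsBPD (X : Set ℂ) [CompactSpace X] (x : X) (d : Rx X →L[ℂ] ℂ) : Prop :=
  ∀ f g : Rx X, d (f * g) = (f : C(X, ℂ)) x * d g + d f * (g : C(X, ℂ)) x

/-- `R(X)` is regular: for every closed `E ⊆ X` and `x ∈ X ∖ E` there is `f ∈ R(X)` with
`f(x) = 1` and `f ≡ 0` on `E`. -/
def RxRegular (X : Set ℂ) [CompactSpace X] : Prop :=
  ∀ E : Set X, IsClosed E → ∀ x : X, x ∉ E →
    ∃ f ∈ Rx X, f x = 1 ∧ ∀ y ∈ E, f y = 0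

open Metric Set

/-- An abstract Swiss cheese: a sequence `((a_n, r_n))_{n ≥ 0}` of centres `a n ∈ ℂ` and
non-negative radii `r n ∈ [0, ∞)`. -/
structure SwissCheese where
  a : ℕ → ℂ
  r : ℕ → ℝ
  r_nonneg : ∀ n, 0 ≤ r n

namespace SwissCheese

/-- The associated Swiss cheese set `X_A = closedBall(a₀, r₀) ∖ ⋃_{n ≥ 1} ball(a_n, r_n)`. -/
def cheeseSet (A : SwissCheese) : Set ℂ :=
  closedBall (A.a 0) (A.r 0) \ ⋃ n ∈ Set.Ici 1, ball (A.a n) (A.r n)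

/-- The significant index set `S_A = {n ≥ 1 : r_n > 0}`. -/
def sig (A : SwissCheese) : Set ℕ := {n | 1 ≤ n ∧ 0 < A.r n}

/-- The radius sum `ρ(A) = ∑_{n ≥ 1} r_n` is finite. -/
def RadSummable (A : SwissCheese) : Prop := Summable fun n => A.r (n + 1)

/-- The radius sum `ρ(A) = ∑_{n ≥ 1} r_n`. -/
noncomputable def radSum (A : SwissCheese) : ℝ := ∑' n, A.r (n + 1)

/-- The discrepancy `δ₁(A) = r₀ − ∑_{n ≥ 1} r_n`. -/
noncomputable def disc (A : SwissCheese) : ℝ := A.r 0 - A.radSum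

/-- `A` is classical: `ρ(A) < ∞`, `r₀ > 0`, each significant closed disk is contained in
`ball(a₀, r₀)`, and distinct significant closed disks are disjoint. -/
def IsClassical (A : SwissCheese) : Prop :=
  A.RadSummable ∧ 0 < A.r 0 ∧ ∀ k ∈ A.sig,
    closedBall (A.a k) (A.r k) ⊆ ball (A.a 0) (A.r 0) ∧
    ∀ l ∈ A.sig, l ≠ k → closedBall (A.a k) (A.r k) ∩ closedBall (A.a l) (A.r l) = ∅

/-- `A` is semiclassical: `ρ(A) < ∞`, `r₀ > 0`, each significant open disk is contained in
`ball(a₀, r₀)`, and distinct significant open disks are disjoint. -/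
def IsSemiclassical (A : SwissCheese) : Prop :=
  A.RadSummable ∧ 0 < A.r 0 ∧ ∀ k ∈ A.sig,
    ball (A.a k) (A.r k) ⊆ ball (A.a 0) (A.r 0) ∧
    ∀ l ∈ A.sig, l ≠ k → ball (A.a k) (A.r k) ∩ ball (A.a l) (A.r l) = ∅

/-- `A` is annular: `a₀ = a₁` and `r₀ > r₁ > 0`. -/
def IsAnnular (A : SwissCheese) : Prop := A.a 0 = A.a 1 ∧ A.r 1 < A.r 0 ∧ 0 < A.r 1

/-- The annular radius sum `ρ_ann(A) = ∑_{n ≥ 2} r_n`. -/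
noncomputable def annRadSum (A : SwissCheese) : ℝ := ∑' n, A.r (n + 2)

/-- The annular discrepancy `δ_ann(A) = r₀ − r₁ − 2 ∑_{n ≥ 2} r_n`. -/
noncomputable def annDisc (A : SwissCheese) : ℝ := A.r 0 - A.r 1 - 2 * A.annRadSum

/-- `A` is redundancy-free: every significant open disk meets `closedBall(a₀, r₀)`, and no
significant open disk is contained in another one. -/
def IsRedundancyFree (A : SwissCheese) : Prop :=
  ∀ k ∈ A.sig, (ball (A.a k) (A.r k) ∩ closedBall (A.a 0) (A.r 0)).Nonempty ∧
    ∀ l ∈ A.sig, l ≠ k → ¬ ball (A.a k) (A.r k) ⊆ ball (A.a l) (A.r l)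

/-- `H_A(U)`: the set of significant indices whose closed disk meets `U`. -/
def HSet (A : SwissCheese) (U : Set ℂ) : Set ℕ :=
  {n | n ∈ A.sig ∧ (closedBall (A.a n) (A.r n) ∩ U).Nonempty}

/-- `ρ_U(A) = ∑_{n ∈ H_A(U)} r_n`. -/
noncomputable def rhoU (A : SwissCheese) (U : Set ℂ) : ℝ := ∑' n : A.HSet U, A.r n

/-- The error set `E(A)`. -/
def errorSet (A : SwissCheese) : Set ℂ :=
  (⋃ m ∈ A.sig, ⋃ n ∈ A.sig, ⋃ _ : m ≠ n,
      closedBall (A.a m) (A.r m) ∩ closedBall (A.a n) (A.r n)) ∪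
    ⋃ n ∈ A.sig, (ball (A.a 0) (A.r 0))ᶜ ∩ closedBall (A.a n) (A.r n)

/-- A Swiss cheese set is compact. -/
instance (A : SwissCheese) : CompactSpace A.cheeseSet :=
  isCompact_iff_compactSpace.mp
    ((isCompact_closedBall _ _).diff (isOpen_biUnion fun _ _ => isOpen_ball))

end SwissCheese


def Cork (X : Set ℂ) : Prop :=
  ∃ R : ℝ, 0 < R ∧ ∀ x ∈ X, ∃ u : ℂ, ‖u‖ = 1 ∧
    ∀ t : ℝ, 0 < t → t ≤ R → ball (x + t * u) (t / 2) ⊆ X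

lemma exists_unit_dir (v : ℂ) : ∃ u : ℂ, ‖u‖ = 1 ∧ v = (‖v‖ : ℂ) * u := by
  by_cases hv : v = 0
  · exact ⟨1, by simp, by simp [hv]⟩
  · have : (‖v‖ : ℂ) ≠ 0 := by simpa using hv
    refine ⟨v / ‖v‖, ?_, by field_simp⟩
    rw [norm_div, Complex.norm_real, norm_norm, div_self]
    simpa using hv

lemma cork_closedBall (s : ℝ) (hs : 0 < s) : Cork (closedBall (0 : ℂ) s) := by
  refine ⟨s / 2, by positivity, fun x hx => ?_⟩
  obtain ⟨u, hu, hxu⟩ := exists_unit_dir x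
  refine ⟨-u, by simpa using hu, fun t ht htR w hw => ?_⟩
  rw [mem_closedBall, dist_zero_right] at hx ⊢
  rw [mem_ball, dist_eq_norm] at hw
  have h1 : ‖x + t * -u‖ = |‖x‖ - t| := by
    have : x + t * -u = ((‖x‖ - t : ℝ) : ℂ) * u := by
      conv_lhs => rw [hxu]
      push_cast; ring
    rw [this, norm_mul, hu, Complex.norm_real, mul_one, Real.norm_eq_abs]
  have h2 : ‖w‖ ≤ ‖w - (x + t * -u)‖ + ‖x + t * -u‖ := by
    simpa using norm_add_le (w - (x + t * -u)) (x + t * -u)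
  have h3 := norm_nonneg x
  rw [h1] at h2
  rcases abs_cases (‖x‖ - t) with h | h <;> linarith

lemma cork_diff (X : Set ℂ) (hX : Cork X) (a : ℂ) (r : ℝ) (hr : 0 < r)
    (h : closedBall a r ⊆ interior X) : Cork (X \ ball a r) := by
  obtain ⟨R, hR, hc⟩ := hX
  obtain ⟨δ, hδ, hδ'⟩ := (isCompact_closedBall a r).exists_cthickening_subset_open isOpen_interior h
  rw [cthickening_closedBall hδ.le hr.le] at hδ'
  have hsub : closedBall a (r + δ) ⊆ X := fun z hz => interior_subset (hδ' (by rwa [add_comm]))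
  refine ⟨min R (δ / 4), by positivity, fun x hx => ?_⟩
  obtain ⟨hxX, hxb⟩ := hx
  rw [mem_ball, dist_eq_norm, not_lt] at hxb
  by_cases hnear : ‖x - a‖ < r + δ / 2
  · obtain ⟨u, hu, hxu⟩ := exists_unit_dir (x - a)
    refine ⟨u, hu, fun t ht htR w hw => ?_⟩
    have htδ := htR.trans (min_le_right _ _)
    rw [mem_ball, dist_eq_norm] at hw
    have h1 : ‖x + t * u - a‖ = ‖x - a‖ + t := by
      have : x + t * u - a = ((‖x - a‖ + t : ℝ) : ℂ) * u := by
        push_cast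
        rw [add_mul, ← hxu]; ring
      rw [this, norm_mul, hu, Complex.norm_real, mul_one, Real.norm_eq_abs, abs_of_nonneg]
      positivity
    have h2 : ‖w - a‖ ≤ ‖w - (x + t * u)‖ + ‖x + t * u - a‖ := by
      simpa using norm_add_le (w - (x + t * u)) (x + t * u - a)
    have h3 : ‖x + t * u - a‖ ≤ ‖w - (x + t * u)‖ + ‖w - a‖ := by
      have := norm_sub_le (w - a) (w - (x + t * u))
      rw [show w - a - (w - (x + t * u)) = x + t * u - a by ring] at this
      linarith
    rw [h1] at h2 h3
    refine ⟨hsub ?_, ?_⟩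
    · rw [mem_closedBall, dist_eq_norm]; linarith
    · rw [mem_ball, dist_eq_norm, not_lt]; linarith
  · obtain ⟨u, hu, hb⟩ := hc x hxX
    refine ⟨u, hu, fun t ht htR w hw => ⟨hb t ht (htR.trans (min_le_left _ _)) hw, ?_⟩⟩
    have htδ := htR.trans (min_le_right _ _)
    rw [mem_ball, dist_eq_norm] at hw
    rw [mem_ball, dist_eq_norm, not_lt]
    have h1 : ‖x - a‖ ≤ ‖w - a‖ + (‖w - (x + t * u)‖ + t) := by
      have e : x - a = (w - a) - ((w - (x + t * u)) + t * u) := by ring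
      have h4 : ‖(t : ℂ) * u‖ = t := by
        rw [norm_mul, hu, Complex.norm_real, mul_one, Real.norm_eq_abs, abs_of_pos ht]
      have h5 := norm_sub_le (w - a) ((w - (x + t * u)) + t * u)
      have h6 := norm_add_le (w - (x + t * u)) (t * u)
      rw [← e] at h5
      linarith
    linarith [not_lt.1 hnear]

lemma cork_diff_finset {ι : Type*} [DecidableEq ι] (X : Set ℂ) (hX : Cork X) (c : ι → ℂ) (r : ℝ)
    (hr : 0 < r) (P : Finset ι) (h : ∀ p ∈ P, closedBall (c p) r ⊆ interior X)
    (hd : ∀ p ∈ P, ∀ q ∈ P, p ≠ q → Disjoint (closedBall (c p) r) (closedBall (c q) r)) :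
    Cork (X \ ⋃ p ∈ P, ball (c p) r) := by
  induction P using Finset.induction_on with
  | empty => simpa using hX
  | insert a s ha ih =>
    have ih' := ih (fun p hp => h p (Finset.mem_insert_of_mem hp))
      (fun p hp q hq => hd p (Finset.mem_insert_of_mem hp) q (Finset.mem_insert_of_mem hq))
    have key := cork_diff _ ih' (c a) r hr ?_
    · rw [Finset.set_biUnion_insert, union_comm, ← sdiff_sdiff]
      exact key
    · set F : Set ℂ := ⋃ p ∈ s, closedBall (c p) r with hF
      have hFc : IsClosed F := isClosed_biUnion_finset fun _ _ => isClosed_closedBall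
      have h1 : closedBall (c a) r ⊆ interior X \ F := by
        intro z hz
        refine ⟨h a (Finset.mem_insert_self _ _) hz, fun hzF => ?_⟩
        simp only [hF, mem_iUnion] at hzF
        obtain ⟨p, hp, hzp⟩ := hzF
        exact (disjoint_left.1 (hd a (Finset.mem_insert_self _ _) p (Finset.mem_insert_of_mem hp)
          (fun e => ha (e ▸ hp)))) hz hzp
      refine h1.trans (interior_maximal ?_ (isOpen_interior.sdiff hFc))
      refine sdiff_subset_sdiff interior_subset ?_
      exact iUnion₂_mono fun p _ => ball_subset_closedBall

def gp (h : ℝ) (p : ℤ × ℤ) : ℂ := ⟨h * p.1, h * p.2⟩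

lemma lattice_sum (N : ℕ) (P : Finset (ℤ × ℤ)) (q : ℤ × ℤ)
    (hP : ∀ p ∈ P, |p.1| ≤ N ∧ |p.2| ≤ N) (hq : |q.1| ≤ N ∧ |q.2| ≤ N) :
    ∑ p ∈ P.erase q, (1 : ℝ) / (max (p.1 - q.1).natAbs (p.2 - q.2).natAbs : ℕ) ≤ 16 * N := by
  classical
  have hm : ∀ p ∈ P.erase q, max (p.1 - q.1).natAbs (p.2 - q.2).natAbs ∈ Finset.Icc 1 (2 * N) := by
    intro p hp
    rw [Finset.mem_erase] at hp
    obtain ⟨h1, h2⟩ := hP p hp.2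
    obtain ⟨h3, h4⟩ := hq
    have : p.1 ≠ q.1 ∨ p.2 ≠ q.2 := by
      by_contra hcon
      push Not at hcon
      exact hp.1 (Prod.ext hcon.1 hcon.2)
    rw [abs_le] at h1 h2 h3 h4
    rw [Finset.mem_Icc]
    omega
  rw [← Finset.sum_fiberwise_of_maps_to hm]
  have : ∀ k ∈ Finset.Icc 1 (2 * N),
      ∑ p ∈ P.erase q with max (p.1 - q.1).natAbs (p.2 - q.2).natAbs = k,
        (1 : ℝ) / (max (p.1 - q.1).natAbs (p.2 - q.2).natAbs : ℕ) ≤ 8 := by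
    intro k hk
    rw [Finset.mem_Icc] at hk
    have hk0 : (0 : ℝ) < k := by exact_mod_cast hk.1
    have hcard : ((P.erase q).filter
        (fun p => max (p.1 - q.1).natAbs (p.2 - q.2).natAbs = k)).card ≤ 8 * k := by
      rw [← Int.card_box (n := k) (by omega)]
      apply Finset.card_le_card_of_injOn (fun p => p - q)
      · intro p hp
        have := (Finset.mem_filter.1 hp).2
        simpa [Int.mem_box] using this
      · intro a _ b _ hab
        simpa using hab
    calc _ = ∑ p ∈ P.erase q with max (p.1 - q.1).natAbs (p.2 - q.2).natAbs = k, (1 : ℝ) / k := by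
          apply Finset.sum_congr rfl
          intro p hp
          rw [(Finset.mem_filter.1 hp).2]
      _ ≤ 8 := by
          rw [Finset.sum_const, nsmul_eq_mul, mul_one_div, div_le_iff₀ hk0]
          exact_mod_cast hcard
  refine (Finset.sum_le_sum this).trans ?_
  simp
  linarith

lemma upper_sum (N : ℕ) (h r : ℝ) (hh : 0 < h) (hr : 0 < r) (P : Finset (ℤ × ℤ))
    (hP : ∀ p ∈ P, |p.1| ≤ N ∧ |p.2| ≤ N) (z : ℂ) (hz : ‖z‖ ≤ h * N)
    (hzr : ∀ p ∈ P, r ≤ ‖z - gp h p‖) :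
    ∑ p ∈ P, r / ‖z - gp h p‖ ≤ 1 + r / h * (32 * N) := by
  classical
  set q : ℤ × ℤ := (round (z.re / h), round (z.im / h)) with hqdef
  have hround : ∀ t : ℝ, |t| ≤ h * N → |round (t / h)| ≤ (N : ℤ) ∧ |t - h * round (t / h)| ≤ h / 2 := by
    intro t ht
    constructor
    · have h1 : |t / h| ≤ N := by
        rw [abs_div, abs_of_pos hh, div_le_iff₀ hh]; linarith
      have h2 := abs_le.1 h1
      have h3 := sub_half_lt_round (t / h)
      have h4 := round_le_add_half (t / h)
      rw [abs_le]
      constructor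
      · have : (-(N:ℤ) - 1 : ℝ) < round (t / h) := by push_cast; linarith
        have : -(N:ℤ) - 1 < round (t / h) := by exact_mod_cast this
        omega
      · have : (round (t / h) : ℝ) < (N:ℤ) + 1 := by push_cast; linarith
        have : round (t / h) < (N:ℤ) + 1 := by exact_mod_cast this
        omega
    · have h5 := abs_sub_round (t / h)
      have : t - h * round (t / h) = h * (t / h - round (t / h)) := by field_simp
      rw [this, abs_mul, abs_of_pos hh]
      nlinarith
  obtain ⟨q1, e1⟩ := hround z.re ((Complex.abs_re_le_norm z).trans hz)
  obtain ⟨q2, e2⟩ := hround z.im ((Complex.abs_im_le_norm z).trans hz)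
  have hterm : ∀ p ∈ P.erase q, r / ‖z - gp h p‖ ≤
      2 * r / h * ((1 : ℝ) / (max (p.1 - q.1).natAbs (p.2 - q.2).natAbs : ℕ)) := by
    intro p hp
    rw [Finset.mem_erase] at hp
    have hne : p.1 ≠ q.1 ∨ p.2 ≠ q.2 := by
      by_contra hcon
      push Not at hcon
      exact hp.1 (Prod.ext hcon.1 hcon.2)
    set k := max (p.1 - q.1).natAbs (p.2 - q.2).natAbs with hk
    have hk1 : 1 ≤ k := by omega
    have hk1' : (1 : ℝ) ≤ k := by exact_mod_cast hk1
    have gen : ∀ (t : ℝ) (a b : ℤ), |t - h * b| ≤ h / 2 → (a - b).natAbs = k →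
        h * k / 2 ≤ |t - h * a| := by
      intro t a b h1 h2
      have h3 : |(a : ℝ) - b| = k := by
        rw [← h2, Nat.cast_natAbs]; push_cast; rfl
      have h4 : h * k ≤ |t - h * a| + |t - h * b| := by
        have := abs_sub (t - h * b) (t - h * a)
        rw [show t - h * b - (t - h * a) = h * (a - b) by ring, abs_mul, abs_of_pos hh, h3] at this
        linarith
      nlinarith
    have hlow : h * k / 2 ≤ ‖z - gp h p‖ := by
      rcases max_choice (p.1 - q.1).natAbs (p.2 - q.2).natAbs with hc | hc
      · refine (gen z.re p.1 q.1 e1 (by rw [hk, hc])).trans ?_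
        simpa [gp] using Complex.abs_re_le_norm (z - gp h p)
      · refine (gen z.im p.2 q.2 e2 (by rw [hk, hc])).trans ?_
        simpa [gp] using Complex.abs_im_le_norm (z - gp h p)
    have hpos : 0 < h * k / 2 := by positivity
    calc r / ‖z - gp h p‖ ≤ r / (h * k / 2) := by gcongr
      _ = _ := by field_simp
  have hsum : ∑ p ∈ P.erase q, r / ‖z - gp h p‖ ≤ r / h * (32 * N) := by
    refine (Finset.sum_le_sum hterm).trans ?_
    rw [← Finset.mul_sum]
    have := lattice_sum N P q hP ⟨q1, q2⟩
    calc _ ≤ 2 * r / h * (16 * N) := by gcongr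
      _ = _ := by ring
  by_cases hqP : q ∈ P
  · rw [← Finset.add_sum_erase _ _ hqP]
    have : r / ‖z - gp h q‖ ≤ 1 := by
      have := hzr q hqP
      rw [div_le_one (by linarith)]; exact this
    linarith
  · rw [Finset.erase_eq_of_notMem hqP] at hsum
    linarith

lemma lower_ball (h t : ℝ) (hh : 0 < h) (ht : 6 * h ≤ t) (y : ℂ) :
    ∃ S : Finset (ℤ × ℤ), (∀ p ∈ S, ‖gp h p - y‖ < t / 4) ∧ (t / (6 * h)) ^ 2 ≤ S.card := by
  set L := t / (6 * h) with hL
  have hL1 : 1 ≤ L := by rw [hL, le_div_iff₀ (by positivity)]; linarith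
  have hcard : ∀ α : ℝ, L ≤ ((Finset.Icc ⌈α - L⌉ ⌊α + L⌋).card : ℝ) := by
    intro α
    rw [Int.card_Icc]
    have h1 : ((⌊α + L⌋ + 1 - ⌈α - L⌉ : ℤ) : ℝ) ≤ ((⌊α + L⌋ + 1 - ⌈α - L⌉).toNat : ℝ) := by
      exact_mod_cast Int.self_le_toNat _
    push_cast at h1
    have h2 := Int.lt_floor_add_one (α + L)
    have h3 := Int.ceil_lt_add_one (α - L)
    linarith
  have hmem : ∀ (α : ℝ) (a : ℤ), a ∈ Finset.Icc ⌈α / h - L⌉ ⌊α / h + L⌋ → |h * a - α| ≤ t / 6 := by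
    intro α a ha
    rw [Finset.mem_Icc, Int.ceil_le, Int.le_floor] at ha
    have : h * a - α = h * (a - α / h) := by field_simp
    rw [this, abs_mul, abs_of_pos hh]
    have h1 : |a - α / h| ≤ L := by rw [abs_le]; constructor <;> linarith
    calc h * |a - α / h| ≤ h * L := by gcongr
      _ = t / 6 := by rw [hL]; field_simp
  refine ⟨Finset.Icc ⌈y.re / h - L⌉ ⌊y.re / h + L⌋ ×ˢ Finset.Icc ⌈y.im / h - L⌉ ⌊y.im / h + L⌋,
    ?_, ?_⟩
  · intro p hp
    rw [Finset.mem_product] at hp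
    have h1 := hmem _ _ hp.1
    have h2 := hmem _ _ hp.2
    have htpos : 0 < t := by linarith
    apply lt_of_pow_lt_pow_left₀ 2 (by positivity)
    rw [← Complex.normSq_eq_norm_sq, Complex.normSq_apply]
    simp only [gp, Complex.sub_re, Complex.sub_im]
    have h3 := sq_le_sq' (abs_le.1 h1).1 (abs_le.1 h1).2
    have h4 := sq_le_sq' (abs_le.1 h2).1 (abs_le.1 h2).2
    nlinarith
  · rw [Finset.card_product, sq]
    push_cast
    have := hcard (y.re / h)
    have := hcard (y.im / h)
    gcongr

lemma gp_mem_bound (N : ℕ) (h : ℝ) (hh : 0 < h) (p : ℤ × ℤ) (hp : ‖gp h p‖ ≤ h * N) :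
    |p.1| ≤ N ∧ |p.2| ≤ N := by
  have gen : ∀ a : ℤ, |h * a| ≤ h * N → |a| ≤ N := by
    intro a ha
    rw [abs_mul, abs_of_pos hh] at ha
    have := le_of_mul_le_mul_left ha hh
    exact_mod_cast this
  exact ⟨gen _ ((Complex.abs_re_le_norm (gp h p)).trans hp),
    gen _ ((Complex.abs_im_le_norm (gp h p)).trans hp)⟩

lemma gp_sep (h : ℝ) (hh : 0 < h) (p q : ℤ × ℤ) (hpq : p ≠ q) : h ≤ ‖gp h p - gp h q‖ := by
  have gen : ∀ a b : ℤ, a ≠ b → h ≤ |h * a - h * b| := by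
    intro a b hab
    rw [← mul_sub, abs_mul, abs_of_pos hh]
    have h1 : (1 : ℤ) ≤ |a - b| := Int.one_le_abs (sub_ne_zero.2 hab)
    have h2 : (1 : ℝ) ≤ |(a : ℝ) - b| := by exact_mod_cast h1
    nlinarith
  by_cases h1 : p.1 = q.1
  · have h2 : p.2 ≠ q.2 := fun h2 => hpq (Prod.ext h1 h2)
    refine (gen _ _ h2).trans ?_
    simpa [gp] using Complex.abs_im_le_norm (gp h p - gp h q)
  · refine (gen _ _ h1).trans ?_
    simpa [gp] using Complex.abs_re_le_norm (gp h p - gp h q)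

lemma step_lemma (s₀ : ℝ) (hs : 0 < s₀) (X : Set ℂ) (hX : Cork X) (hXs : X ⊆ closedBall 0 s₀)
    (η : ℝ) (hη : 0 < η) (M : ℝ) :
    ∃ (h r : ℝ) (P : Finset (ℤ × ℤ)), 0 < r ∧
      (∀ p ∈ P, closedBall (gp h p) r ⊆ interior X) ∧
      (∀ p ∈ P, ∀ q ∈ P, p ≠ q → Disjoint (closedBall (gp h p) r) (closedBall (gp h q) r)) ∧
      P.card * r ≤ η ∧
      (∀ z ∈ X, (∀ p ∈ P, r ≤ ‖z - gp h p‖) → ∑ p ∈ P, r / ‖z - gp h p‖ ≤ 2) ∧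
      (∀ x ∈ X, (∀ p ∈ P, r ≤ ‖x - gp h p‖) → M ≤ ∑ p ∈ P, r / ‖x - gp h p‖ ^ 2) := by
  classical
  obtain ⟨R, hR, hc⟩ := hX
  obtain ⟨c, hc0, hcη, hcs⟩ : ∃ c : ℝ, 0 < c ∧ c * (9 * s₀ ^ 2) ≤ η ∧ c * (32 * s₀) ≤ 1 := by
    refine ⟨min (η / (9 * s₀ ^ 2)) (1 / (32 * s₀)), by positivity, ?_, ?_⟩
    · rw [← le_div_iff₀ (by positivity)]; exact min_le_left _ _
    · rw [← le_div_iff₀ (by positivity)]; exact min_le_right _ _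
  obtain ⟨J, hJ⟩ := exists_nat_ge (60 * M / c)
  obtain ⟨N, hN⟩ := exists_nat_ge (max 1 (6 * s₀ * 2 ^ J / R))
  have hN1 : (1 : ℝ) ≤ N := (le_max_left _ _).trans hN
  have hN2 : 6 * s₀ * 2 ^ J / R ≤ N := (le_max_right _ _).trans hN
  have hN0 : (0 : ℝ) < N := by linarith
  obtain ⟨h, hh, hhN⟩ : ∃ h : ℝ, 0 < h ∧ h * N = s₀ := ⟨s₀ / N, by positivity, by field_simp⟩
  have hhs : h ≤ s₀ := by nlinarith
  have hhR : 6 * h ≤ R / 2 ^ J := by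
    rw [div_le_iff₀ hR] at hN2
    rw [le_div_iff₀ (by positivity)]
    have : N * (6 * h * 2 ^ J) ≤ N * R := by
      calc N * (6 * h * 2 ^ J) = 6 * (h * N) * 2 ^ J := by ring
        _ ≤ N * R := by rw [hhN]; exact hN2
    exact le_of_mul_le_mul_left this hN0
  set r := c * h ^ 2 with hr
  have hr0 : 0 < r := by positivity
  have hrh : r ≤ h / 4 := by
    have : c * h ≤ c * s₀ := by gcongr
    nlinarith
  set P : Finset (ℤ × ℤ) := ((Finset.Icc (-(N : ℤ)) N) ×ˢ (Finset.Icc (-(N : ℤ)) N)).filter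
    (fun p => closedBall (gp h p) (h / 4) ⊆ interior X) with hPdef
  have hPb : ∀ p ∈ P, |p.1| ≤ N ∧ |p.2| ≤ N := by
    intro p hp
    have := (Finset.mem_filter.1 hp).1
    rw [Finset.mem_product, Finset.mem_Icc, Finset.mem_Icc] at this
    exact ⟨abs_le.2 this.1, abs_le.2 this.2⟩
  have hPmem : ∀ p, closedBall (gp h p) (h / 4) ⊆ interior X → p ∈ P := by
    intro p hp
    have h1 : gp h p ∈ closedBall (0 : ℂ) s₀ :=
      hXs (interior_subset (hp (mem_closedBall_self (by positivity))))
    rw [mem_closedBall, dist_zero_right] at h1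
    have h2 := gp_mem_bound N h hh p (by rw [hhN]; exact h1)
    rw [abs_le, abs_le] at h2
    refine Finset.mem_filter.2 ⟨?_, hp⟩
    rw [Finset.mem_product, Finset.mem_Icc, Finset.mem_Icc]
    exact h2
  refine ⟨h, r, P, hr0, ?_, ?_, ?_, ?_, ?_⟩
  · intro p hp
    exact (closedBall_subset_closedBall hrh).trans (Finset.mem_filter.1 hp).2
  · intro p _ q _ hpq
    apply closedBall_disjoint_closedBall
    have := gp_sep h hh p q hpq
    rw [dist_eq_norm]
    linarith
  · have h1 : P.card ≤ (2 * N + 1) ^ 2 := by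
      refine (Finset.card_filter_le _ _).trans ?_
      rw [Finset.card_product, Int.card_Icc, sq]
      have : ((N : ℤ) + 1 - -N).toNat = 2 * N + 1 := by omega
      rw [this]
    have h2 : (P.card : ℝ) ≤ (3 * N) ^ 2 := by
      have : (P.card : ℝ) ≤ (2 * N + 1) ^ 2 := by exact_mod_cast h1
      nlinarith
    calc (P.card : ℝ) * r ≤ (3 * N) ^ 2 * r := by gcongr
      _ = c * (9 * (h * N) ^ 2) := by rw [hr]; ring
      _ ≤ η := by rw [hhN]; exact hcη
  · intro z hz hzr
    have hz' := hXs hz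
    rw [mem_closedBall, dist_zero_right] at hz'
    have := upper_sum N h r hh hr0 P hPb z (by rw [hhN]; exact hz') hzr
    have h2 : r / h * (32 * N) = c * (32 * (h * N)) := by rw [hr]; field_simp
    rw [h2, hhN] at this
    linarith
  · intro x hx hxr
    obtain ⟨u, hu, hball⟩ := hc x hx
    have hbound : ∀ j ∈ Finset.range J, 6 * h ≤ R / 2 ^ j := by
      intro j hj
      refine hhR.trans ?_
      have : (2 : ℝ) ^ j ≤ 2 ^ J := pow_le_pow_right₀ (by norm_num) (Finset.mem_range.1 hj).le
      gcongr
    have hS : ∀ j : ℕ, ∃ S : Finset (ℤ × ℤ), j ∈ Finset.range J →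
        (∀ p ∈ S, ‖gp h p - (x + (R / 2 ^ j : ℝ) * u)‖ < (R / 2 ^ j) / 4) ∧
          ((R / 2 ^ j) / (6 * h)) ^ 2 ≤ S.card := by
      intro j
      by_cases hj : j ∈ Finset.range J
      · obtain ⟨S, h1, h2⟩ := lower_ball h (R / 2 ^ j) hh (hbound j hj) (x + (R / 2 ^ j : ℝ) * u)
        exact ⟨S, fun _ => ⟨h1, h2⟩⟩
      · exact ⟨∅, fun h => absurd h hj⟩
    choose S hS using hS
    have htu : ∀ j : ℕ, ‖((R / 2 ^ j : ℝ) : ℂ) * u‖ = R / 2 ^ j := by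
      intro j
      rw [norm_mul, hu, Complex.norm_real, mul_one, Real.norm_eq_abs, abs_of_pos (by positivity)]
    have hup : ∀ j ∈ Finset.range J, ∀ p ∈ S j, ‖x - gp h p‖ ≤ 5 / 4 * (R / 2 ^ j) := by
      intro j hj p hp
      have h1 := (hS j hj).1 p hp
      have h2 := norm_add_le (gp h p - (x + (R / 2 ^ j : ℝ) * u)) ((R / 2 ^ j : ℝ) * u)
      rw [htu, show gp h p - (x + (R / 2 ^ j : ℝ) * u) + (R / 2 ^ j : ℝ) * u = gp h p - x by ring,
        norm_sub_rev] at h2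
      linarith
    have hlo : ∀ j ∈ Finset.range J, ∀ p ∈ S j, 3 / 4 * (R / 2 ^ j) < ‖x - gp h p‖ := by
      intro j hj p hp
      have h1 := (hS j hj).1 p hp
      have h2 := norm_sub_le (gp h p - x) (gp h p - (x + (R / 2 ^ j : ℝ) * u))
      rw [show gp h p - x - (gp h p - (x + (R / 2 ^ j : ℝ) * u)) = (R / 2 ^ j : ℝ) * u by ring,
        htu, norm_sub_rev (gp h p) x] at h2
      linarith
    have hSP : ∀ j ∈ Finset.range J, S j ⊆ P := by
      intro j hj p hp
      apply hPmem
      have h1 := (hS j hj).1 p hp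
      have h3 := hbound j hj
      have htp : 0 < R / 2 ^ j := by positivity
      have h4 : R / 2 ^ j ≤ R := div_le_self hR.le (one_le_pow₀ (by norm_num))
      refine Subset.trans ?_ (interior_maximal (hball _ htp h4) isOpen_ball)
      apply closedBall_subset_ball'
      rw [dist_eq_norm]
      linarith
    have hdisj0 : ∀ i ∈ Finset.range J, ∀ j ∈ Finset.range J, i < j → Disjoint (S i) (S j) := by
      intro i hi j hj hij
      rw [Finset.disjoint_left]
      intro p hpi hpj
      have h1 := hlo i hi p hpi
      have h2 := hup j hj p hpj
      have h3 : R / 2 ^ j ≤ R / 2 ^ (i + 1) := by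
        have : (2 : ℝ) ^ (i + 1) ≤ 2 ^ j := pow_le_pow_right₀ (by norm_num) hij
        gcongr
      have h4 : R / 2 ^ (i + 1) = R / 2 ^ i / 2 := by rw [pow_succ]; field_simp
      have htp : 0 < R / 2 ^ i := by positivity
      linarith
    have hdisj : (Finset.range J : Set ℕ).PairwiseDisjoint S := by
      intro i hi j hj hij
      rcases lt_or_gt_of_ne hij with hlt | hlt
      · exact hdisj0 i hi j hj hlt
      · exact (hdisj0 j hj i hi hlt).symm
    have hsubU : (Finset.range J).biUnion S ⊆ P := Finset.biUnion_subset.2 hSP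
    have hscale : ∀ j ∈ Finset.range J, c / 60 ≤ ∑ p ∈ S j, r / ‖x - gp h p‖ ^ 2 := by
      intro j hj
      have htp : 0 < R / 2 ^ j := by positivity
      set t := R / 2 ^ j with ht
      have h1 : ∀ p ∈ S j, r / (5 / 4 * t) ^ 2 ≤ r / ‖x - gp h p‖ ^ 2 := by
        intro p hp
        have h2 := hup j hj p hp
        have h3 : 0 < ‖x - gp h p‖ := by
          have := hlo j hj p hp
          have : 0 < 3 / 4 * t := by positivity
          linarith
        gcongr
      have h2 := Finset.card_nsmul_le_sum _ _ _ h1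
      rw [nsmul_eq_mul] at h2
      refine le_trans ?_ h2
      calc c / 60 ≤ c * (16 / 900) := by linarith
        _ = (t / (6 * h)) ^ 2 * (r / (5 / 4 * t) ^ 2) := by rw [hr]; field_simp; norm_num
        _ ≤ (S j).card * (r / (5 / 4 * t) ^ 2) := by
            have := (hS j hj).2
            gcongr
    calc M ≤ J * (c / 60) := by
          rw [div_le_iff₀ hc0] at hJ
          linarith
      _ = ∑ j ∈ Finset.range J, c / 60 := by simp
      _ ≤ ∑ j ∈ Finset.range J, ∑ p ∈ S j, r / ‖x - gp h p‖ ^ 2 := Finset.sum_le_sum hscale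
      _ = ∑ p ∈ (Finset.range J).biUnion S, r / ‖x - gp h p‖ ^ 2 := (Finset.sum_biUnion hdisj).symm
      _ ≤ ∑ p ∈ P, r / ‖x - gp h p‖ ^ 2 :=
          Finset.sum_le_sum_of_subset_of_nonneg hsubU (fun _ _ _ => by positivity)

lemma R0_sub_Rx (X : Set ℂ) [CompactSpace X] {f : C(X, ℂ)} (hf : f ∈ R0set X) : f ∈ Rx X :=
  Subalgebra.le_topologicalClosure _ (Algebra.subset_adjoin hf)

lemma bpd_zero (X : Set ℂ) [CompactSpace X] (x : X) (d : Rx X →L[ℂ] ℂ) (hd : IsBPD X x d)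
    (H : ∀ M : ℝ, ∃ (P : Finset (ℤ × ℤ)) (h r : ℝ), 0 < r ∧ (∀ z ∈ X, ∀ p ∈ P, z ≠ gp h p) ∧
      (∀ z ∈ X, ∑ p ∈ P, r / ‖z - gp h p‖ ≤ 2) ∧ M ≤ ∑ p ∈ P, r / ‖(x : ℂ) - gp h p‖ ^ 2) :
    d = 0 := by
  classical
  have hd1 : d 1 = 0 := by
    have := hd 1 1
    simp at this
    exact this
  have hdc : ∀ c : ℂ, d (algebraMap ℂ (Rx X) c) = 0 := by
    intro c
    rw [Algebra.algebraMap_eq_smul_one, map_smul, hd1, smul_zero]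
  -- polynomials
  let pol : Polynomial ℂ → C(X, ℂ) := fun p => ⟨fun z => p.eval (z : ℂ), by fun_prop⟩
  have hpol0 : ∀ p, pol p ∈ R0set X := fun p => ⟨p, 1, by simp, fun z => by simp [pol]⟩
  let Pol : Polynomial ℂ → Rx X := fun p => ⟨pol p, R0_sub_Rx X (hpol0 p)⟩
  -- first show `d Z = 0`
  have hZ : d (Pol Polynomial.X) = 0 := by
    by_contra hne
    have hpos : 0 < ‖d (Pol Polynomial.X)‖ := norm_pos_iff.2 hne
    obtain ⟨P, h, r, hr, hav, hup, hlow⟩ := H ((2 * ‖d‖ + 1) / ‖d (Pol Polynomial.X)‖)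
    have hG : ∀ p : ℤ × ℤ, ∃ g : Rx X, p ∈ P → ∀ z : X, (g : C(X, ℂ)) z = 1 / ((z : ℂ) - gp h p) := by
      intro p
      by_cases hp : p ∈ P
      · have hne : ∀ z : X, (z : ℂ) - gp h p ≠ 0 := fun z => sub_ne_zero.2 (hav z z.2 p hp)
        refine ⟨⟨⟨fun z => 1 / ((z : ℂ) - gp h p), ?_⟩, R0_sub_Rx X ?_⟩, fun _ z => rfl⟩
        · exact continuous_const.div (by fun_prop) hne
        · exact ⟨1, Polynomial.X - Polynomial.C (gp h p), by simpa using hne, fun z => by simp⟩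
      · exact ⟨0, fun h => absurd h hp⟩
    choose G hG using hG
    have hdG : ∀ p ∈ P, d (G p) = - d (Pol Polynomial.X) / ((x : ℂ) - gp h p) ^ 2 := by
      intro p hp
      have hx0 : (x : ℂ) - gp h p ≠ 0 := sub_ne_zero.2 (hav x x.2 p hp)
      have e : G p * (Pol Polynomial.X - algebraMap ℂ (Rx X) (gp h p)) = 1 := by
        apply Subtype.ext
        ext z
        have hz0 : (z : ℂ) - gp h p ≠ 0 := sub_ne_zero.2 (hav z z.2 p hp)
        have h1 : (((Pol Polynomial.X : Rx X) : C(X, ℂ)) z) = z := by simp [Pol, pol]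
        have h2 : (((algebraMap ℂ (Rx X) (gp h p) : Rx X) : C(X, ℂ)) z) = gp h p := rfl
        change ((G p : Rx X) : C(X, ℂ)) z * ((((Pol Polynomial.X : Rx X) : C(X, ℂ)) z) -
          (((algebraMap ℂ (Rx X) (gp h p) : Rx X) : C(X, ℂ)) z)) = 1
        rw [h1, h2, hG p hp z]
        field_simp
      have e2 := hd (G p) (Pol Polynomial.X - algebraMap ℂ (Rx X) (gp h p))
      have h1 : (((Pol Polynomial.X - algebraMap ℂ (Rx X) (gp h p) : Rx X) : C(X, ℂ)) x)
          = (x : ℂ) - gp h p := by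
        change (Polynomial.X : Polynomial ℂ).eval (x : ℂ) - gp h p = _
        simp
      rw [e, hd1, map_sub, hdc, sub_zero, h1, hG p hp x] at e2
      field_simp
      field_simp at e2
      linear_combination -e2
    let lam : ℤ × ℤ → ℂ := fun p => -(((x : ℂ) - gp h p) ^ 2 / (‖(x : ℂ) - gp h p‖ : ℂ) ^ 2) * r
    have hlam : ∀ p ∈ P, ‖lam p‖ = r := by
      intro p hp
      have hx0 : ‖(x : ℂ) - gp h p‖ ≠ 0 := norm_ne_zero_iff.2 (sub_ne_zero.2 (hav x x.2 p hp))
      simp only [lam, norm_mul, norm_neg, norm_div, norm_pow, Complex.norm_real,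
        Real.norm_eq_abs, abs_of_pos hr, abs_norm]
      field_simp
    let F : Rx X := ∑ p ∈ P, lam p • G p
    have hF : ‖F‖ ≤ 2 := by
      change ‖(F : C(X, ℂ))‖ ≤ 2
      rw [ContinuousMap.norm_le _ (by norm_num)]
      intro z
      have : (F : C(X, ℂ)) z = ∑ p ∈ P, lam p * ((G p : Rx X) : C(X, ℂ)) z := by
        simp [F]
      rw [this]
      refine (norm_sum_le _ _).trans (le_trans (le_of_eq ?_) (hup z z.2))
      apply Finset.sum_congr rfl
      intro p hp
      rw [norm_mul, hlam p hp, hG p hp z, norm_div, norm_one, mul_one_div]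
    have hdF : d F = d (Pol Polynomial.X) * ((∑ p ∈ P, r / ‖(x : ℂ) - gp h p‖ ^ 2 : ℝ) : ℂ) := by
      simp only [F, map_sum, map_smul, Complex.ofReal_sum, Finset.mul_sum]
      apply Finset.sum_congr rfl
      intro p hp
      have hx0 : (x : ℂ) - gp h p ≠ 0 := sub_ne_zero.2 (hav x x.2 p hp)
      have hx1 : (‖(x : ℂ) - gp h p‖ : ℂ) ≠ 0 := by
        exact_mod_cast norm_ne_zero_iff.2 hx0
      rw [hdG p hp, smul_eq_mul]
      simp only [lam]
      push_cast
      field_simp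
    have h1 : ‖d F‖ ≤ ‖d‖ * 2 := (d.le_opNorm F).trans (by gcongr)
    rw [hdF, norm_mul, Complex.norm_real, Real.norm_eq_abs] at h1
    rw [div_le_iff₀ hpos] at hlow
    have h2 := le_abs_self (∑ p ∈ P, r / ‖(x : ℂ) - gp h p‖ ^ 2)
    nlinarith
  have hPol : ∀ p, d (Pol p) = 0 := by
    intro p
    induction p using Polynomial.induction_on' with
    | add p q hp hq =>
      have : Pol (p + q) = Pol p + Pol q := by
        apply Subtype.ext; ext z; simp [Pol, pol]
      rw [this, map_add, hp, hq, add_zero]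
    | monomial n a =>
      induction n with
      | zero =>
        have : Pol (Polynomial.monomial 0 a) = algebraMap ℂ (Rx X) a := by
          apply Subtype.ext; ext z
          change (Polynomial.monomial 0 a).eval (z : ℂ) = a
          simp
        rw [this, hdc]
      | succ n ih =>
        have : Pol (Polynomial.monomial (n + 1) a) = Pol (Polynomial.monomial n a) * Pol Polynomial.X := by
          apply Subtype.ext; ext z
          simp [Pol, pol, pow_succ, mul_assoc]
        rw [this, hd, hZ, ih]
        simp
  have hR0 : ∀ (f : C(X, ℂ)) (hf : f ∈ R0set X), d ⟨f, R0_sub_Rx X hf⟩ = 0 := by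
    intro f hf
    obtain ⟨p, q, hq, hfe⟩ := id hf
    have e : (⟨f, R0_sub_Rx X hf⟩ : Rx X) * Pol q = Pol p := by
      apply Subtype.ext; ext z
      change f z * q.eval (z : ℂ) = p.eval (z : ℂ)
      rw [hfe z, div_mul_cancel₀ _ (hq z)]
    have e2 := hd ⟨f, R0_sub_Rx X hf⟩ (Pol q)
    rw [e, hPol, hPol] at e2
    have e3 : d ⟨f, R0_sub_Rx X hf⟩ * q.eval (x : ℂ) = 0 := by
      change 0 = f x * 0 + d ⟨f, R0_sub_Rx X hf⟩ * q.eval (x : ℂ) at e2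
      rw [e2]; ring
    exact (mul_eq_zero.1 e3).resolve_right (hq x)
  have hadj : ∀ (f : C(X, ℂ)) (hf : f ∈ Algebra.adjoin ℂ (R0set X)),
      d ⟨f, Subalgebra.le_topologicalClosure _ hf⟩ = 0 := by
    intro f hf
    induction hf using Algebra.adjoin_induction with
    | mem f hf => exact hR0 f hf
    | algebraMap c => exact hdc c
    | add f g hf hg ihf ihg =>
      have := map_add d ⟨f, Subalgebra.le_topologicalClosure _ hf⟩ ⟨g, Subalgebra.le_topologicalClosure _ hg⟩
      rw [ihf, ihg, add_zero] at this
      exact this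
    | mul f g hf hg ihf ihg =>
      have := hd ⟨f, Subalgebra.le_topologicalClosure _ hf⟩ ⟨g, Subalgebra.le_topologicalClosure _ hg⟩
      rw [ihf, ihg, mul_zero, zero_mul, add_zero] at this
      exact this
  ext f
  have hfc : (f : C(X, ℂ)) ∈ closure ((Algebra.adjoin ℂ (R0set X) : Subalgebra ℂ C(X, ℂ)) : Set C(X, ℂ)) := f.2
  obtain ⟨u, hu, hlim⟩ := mem_closure_iff_seq_limit.1 hfc
  have hlim' : Filter.Tendsto (fun n => (⟨u n, Subalgebra.le_topologicalClosure _ (hu n)⟩ : Rx X))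
      Filter.atTop (nhds f) := by
    rw [tendsto_subtype_rng]; exact hlim
  have h3 := (d.continuous.tendsto f).comp hlim'
  have h4 : (d ∘ fun n => (⟨u n, Subalgebra.le_topologicalClosure _ (hu n)⟩ : Rx X)) = fun _ => 0 := by
    funext n; exact hadj (u n) (hu n)
  rw [h4] at h3
  exact tendsto_nhds_unique h3 tendsto_const_nhds

lemma closedBall_inter_interior (a : ℂ) (r : ℝ) (hr : 0 < r) (Y : Set ℂ)
    (h : Disjoint (ball a r) Y) : Disjoint (closedBall a r) (interior Y) := by
  rw [← closure_ball a hr.ne']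
  exact (h.mono_right interior_subset).closure_left isOpen_interior

/-- for every `ε > 0` and `s₀ > s₁ ≥ 0` there is a classical abstract Swiss
cheese `A` with `a₀ = a₁`, `r₀ = s₀`, `r₁ = s₁` and `ρ_ann(A) = ∑_{n ≥ 2} r_n < ε`, such
that `R(X_A)` has no non-zero bounded point derivation at any point of `X_A`. -/
theorem stmt_5 (ε : ℝ) (hε : 0 < ε) (s₀ s₁ : ℝ) (hs₁ : 0 ≤ s₁) (hs : s₁ < s₀) :
    ∃ A : SwissCheese, A.IsClassical ∧ A.a 0 = A.a 1 ∧ A.r 0 = s₀ ∧ A.r 1 = s₁ ∧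
      A.annRadSum < ε ∧
      ∀ (x : A.cheeseSet) (d : Rx A.cheeseSet →L[ℂ] ℂ), IsBPD A.cheeseSet x d → d = 0 := by
  classical
  have hs0 : 0 < s₀ := lt_of_le_of_lt hs₁ hs
  let St := {X : Set ℂ // Cork X ∧ X ⊆ closedBall 0 s₀}
  have hstep : ∀ (m : ℕ) (X : St), ∃ D : ℝ × ℝ × Finset (ℤ × ℤ), 0 < D.2.1 ∧
      (∀ p ∈ D.2.2, closedBall (gp D.1 p) D.2.1 ⊆ interior X.1) ∧
      (∀ p ∈ D.2.2, ∀ q ∈ D.2.2, p ≠ q →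
        Disjoint (closedBall (gp D.1 p) D.2.1) (closedBall (gp D.1 q) D.2.1)) ∧
      D.2.2.card * D.2.1 ≤ ε / 2 / 2 / 2 ^ m ∧
      (∀ z ∈ X.1, (∀ p ∈ D.2.2, D.2.1 ≤ ‖z - gp D.1 p‖) →
        ∑ p ∈ D.2.2, D.2.1 / ‖z - gp D.1 p‖ ≤ 2) ∧
      (∀ x ∈ X.1, (∀ p ∈ D.2.2, D.2.1 ≤ ‖x - gp D.1 p‖) →
        (m : ℝ) ≤ ∑ p ∈ D.2.2, D.2.1 / ‖x - gp D.1 p‖ ^ 2) := by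
    intro m X
    obtain ⟨h, r, P, H⟩ := step_lemma s₀ hs0 X.1 X.2.1 X.2.2 (ε / 2 / 2 / 2 ^ m) (by positivity) m
    exact ⟨(h, r, P), H⟩
  choose D hDr hDi hDd hDc hDu hDl using hstep
  have hX0 : Cork (closedBall (0 : ℂ) s₀ \ ball 0 s₁) := by
    rcases hs₁.eq_or_lt with h | h
    · rw [← h, ball_zero, sdiff_empty]
      exact cork_closedBall s₀ hs0
    · refine cork_diff _ (cork_closedBall s₀ hs0) 0 s₁ h ?_
      rw [interior_closedBall _ hs0.ne']
      exact closedBall_subset_ball hs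
  let nxt : ℕ → St → St := fun m X =>
    ⟨X.1 \ ⋃ p ∈ (D m X).2.2, ball (gp (D m X).1 p) (D m X).2.1,
      cork_diff_finset X.1 X.2.1 _ _ (hDr m X) _ (hDi m X) (hDd m X),
      sdiff_subset.trans X.2.2⟩
  let Xs : ℕ → St := fun m => Nat.rec ⟨closedBall (0 : ℂ) s₀ \ ball 0 s₁, hX0, sdiff_subset⟩ nxt m
  have hXs0 : (Xs 0).1 = closedBall (0 : ℂ) s₀ \ ball 0 s₁ := rfl
  let h : ℕ → ℝ := fun m => (D m (Xs m)).1
  let ρ : ℕ → ℝ := fun m => (D m (Xs m)).2.1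
  let P : ℕ → Finset (ℤ × ℤ) := fun m => (D m (Xs m)).2.2
  have hXs1 : ∀ m, (Xs (m + 1)).1 = (Xs m).1 \ ⋃ p ∈ P m, ball (gp (h m) p) (ρ m) := fun m => rfl
  have hρ : ∀ m, 0 < ρ m := fun m => hDr m (Xs m)
  have hanti : Antitone fun m => (Xs m).1 := antitone_nat_of_succ_le fun m => by
    rw [hXs1]; exact sdiff_subset
  have hin : ∀ m, ∀ p ∈ P m, closedBall (gp (h m) p) (ρ m) ⊆ interior (Xs m).1 :=
    fun m => hDi m (Xs m)
  have hin0 : ∀ m, ∀ p ∈ P m, closedBall (gp (h m) p) (ρ m) ⊆ interior (Xs 0).1 :=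
    fun m p hp => (hin m p hp).trans (interior_mono (hanti (Nat.zero_le m)))
  have hdiff : ∀ k m, k < m → ∀ p ∈ P k, ∀ q ∈ P m,
      Disjoint (closedBall (gp (h k) p) (ρ k)) (closedBall (gp (h m) q) (ρ m)) := by
    intro k m hkm p hp q hq
    have h1 : Disjoint (ball (gp (h k) p) (ρ k)) (Xs m).1 := by
      refine Disjoint.mono_right (hanti (Nat.succ_le_of_lt hkm)) ?_
      change Disjoint _ (Xs (k + 1)).1
      rw [hXs1]
      refine Disjoint.mono_left ?_ disjoint_sdiff_right
      exact subset_biUnion_of_mem (u := fun p => ball (gp (h k) p) (ρ k)) hp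
    exact (closedBall_inter_interior _ _ (hρ k) _ h1).mono_right (hin m q hq)
  have hall : ∀ k m p q, p ∈ P k → q ∈ P m → (k, p) ≠ (m, q) →
      Disjoint (closedBall (gp (h k) p) (ρ k)) (closedBall (gp (h m) q) (ρ m)) := by
    intro k m p q hp hq hne
    rcases lt_trichotomy k m with hlt | heq | hlt
    · exact hdiff k m hlt p hp q hq
    · subst heq
      exact hDd k (Xs k) p hp q hq (fun e => hne (by rw [e]))
    · exact (hdiff m k hlt q hq p hp).symm
  have h01 : 0 < s₁ → ∀ m, ∀ p ∈ P m, Disjoint (closedBall (0 : ℂ) s₁) (closedBall (gp (h m) p) (ρ m)) := by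
    intro hs1 m p hp
    refine (closedBall_inter_interior _ _ hs1 (Xs 0).1 ?_).mono_right (hin0 m p hp)
    rw [hXs0]; exact disjoint_sdiff_right
  have h00 : ∀ m, ∀ p ∈ P m, closedBall (gp (h m) p) (ρ m) ⊆ ball 0 s₀ := by
    intro m p hp
    rw [← interior_closedBall _ hs0.ne']
    refine (hin0 m p hp).trans (interior_mono ?_)
    rw [hXs0]; exact sdiff_subset
  -- radii
  let rad : ℕ × ℤ × ℤ → ℝ := fun i => if i.2 ∈ P i.1 then ρ i.1 else 0
  have hrad0 : ∀ i, 0 ≤ rad i := fun i => by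
    simp only [rad]; split_ifs
    · exact (hρ _).le
    · exact le_rfl
  have hfib : ∀ m, HasSum (fun p => rad (m, p)) ((P m).card * ρ m) := by
    intro m
    have h1 : HasSum (fun p => rad (m, p)) (∑ p ∈ P m, rad (m, p)) :=
      hasSum_sum_of_ne_finset_zero (fun p hp => by simp [rad, hp])
    have h2 : ∑ p ∈ P m, rad (m, p) = (P m).card * ρ m := by
      rw [Finset.sum_congr rfl (g := fun _ => ρ m) (fun p hp => by simp [rad, hp])]
      simp
    rwa [h2] at h1
  have hle : ∀ m, ((P m).card : ℝ) * ρ m ≤ ε / 2 / 2 / 2 ^ m := fun m => hDc m (Xs m)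
  have hsumm : Summable fun m => ((P m).card : ℝ) * ρ m :=
    Summable.of_nonneg_of_le (fun m => mul_nonneg (Nat.cast_nonneg _) (hρ m).le) hle
      (summable_geometric_two' (ε / 2))
  have hradS : Summable rad := by
    rw [summable_prod_of_nonneg hrad0]
    refine ⟨fun m => (hfib m).summable, ?_⟩
    simp_rw [fun m => (hfib m).tsum_eq]
    exact hsumm
  have hradT : ∑' i, rad i < ε := by
    rw [hradS.tsum_prod' (fun m => (hfib m).summable)]
    simp_rw [fun m => (hfib m).tsum_eq]
    have := hsumm.tsum_le_tsum hle (summable_geometric_two' (ε / 2))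
    rw [tsum_geometric_two'] at this
    linarith
  let e : ℕ ≃ ℕ × ℤ × ℤ := (Denumerable.eqv (ℕ × ℤ × ℤ)).symm
  let A : SwissCheese :=
    { a := fun n => match n with
        | 0 => 0
        | 1 => 0
        | n + 2 => gp (h (e n).1) (e n).2
      r := fun n => match n with
        | 0 => s₀
        | 1 => s₁
        | n + 2 => rad (e n)
      r_nonneg := fun n => match n with
        | 0 => hs0.le
        | 1 => hs₁
        | n + 2 => hrad0 (e n) }
  have hA0 : A.a 0 = 0 := rfl
  have hA1 : A.a 1 = 0 := rfl
  have hA2 : ∀ n, A.a (n + 2) = gp (h (e n).1) (e n).2 := fun n => rfl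
  have hr0 : A.r 0 = s₀ := rfl
  have hr1 : A.r 1 = s₁ := rfl
  have hr2 : ∀ n, A.r (n + 2) = rad (e n) := fun n => rfl
  have hS2 : Summable fun n => A.r (n + 2) := by
    simp_rw [hr2]
    exact (e.summable_iff (f := rad)).2 hradS
  have hpos : ∀ n, 0 < A.r (n + 2) → (e n).2 ∈ P (e n).1 ∧ A.r (n + 2) = ρ (e n).1 := by
    intro n hn
    rw [hr2] at hn ⊢
    simp only [rad] at hn ⊢
    split_ifs at hn ⊢ with h1
    · exact ⟨h1, rfl⟩
    · exact absurd hn (lt_irrefl _)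
  have hsub : ∀ m, A.cheeseSet ⊆ (Xs m).1 := by
    intro m
    induction m with
    | zero =>
      rw [hXs0]
      intro z hz
      refine ⟨hz.1, fun hz1 => hz.2 ?_⟩
      exact mem_biUnion (show (1 : ℕ) ∈ Set.Ici 1 from mem_Ici.2 le_rfl) hz1
    | succ m ih =>
      rw [hXs1]
      intro z hz
      refine ⟨ih hz, fun hz1 => hz.2 ?_⟩
      simp only [mem_iUnion] at hz1
      obtain ⟨p, hp, hzp⟩ := hz1
      refine mem_biUnion (show e.symm (m, p) + 2 ∈ Set.Ici 1 by simp) ?_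
      rw [hA2, hr2, e.apply_symm_apply]
      simpa [rad, hp] using hzp
  refine ⟨A, ⟨?_, hs0, ?_⟩, rfl, rfl, rfl, ?_, ?_⟩
  · exact (summable_nat_add_iff (f := fun n => A.r (n + 1)) 1).1 hS2
  · intro k hk
    match k, hk with
    | 0, hk => exact absurd hk.1 (by norm_num)
    | 1, hk =>
      refine ⟨closedBall_subset_ball hs, fun l hl hlk => ?_⟩
      match l, hl, hlk with
      | 0, hl, _ => exact absurd hl.1 (by norm_num)
      | 1, _, hlk => exact absurd rfl hlk
      | n + 2, hl, _ =>
        obtain ⟨h1, h2⟩ := hpos n hl.2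
        rw [← disjoint_iff_inter_eq_empty, h2]
        exact h01 hk.2 _ _ h1
    | n + 2, hk =>
      obtain ⟨h1, h2⟩ := hpos n hk.2
      rw [h2]
      refine ⟨h00 _ _ h1, fun l hl hlk => ?_⟩
      rw [← disjoint_iff_inter_eq_empty]
      match l, hl, hlk with
      | 0, hl, _ => exact absurd hl.1 (by norm_num)
      | 1, hl, _ => exact (h01 hl.2 _ _ h1).symm
      | m + 2, hl, hlk =>
        obtain ⟨h3, h4⟩ := hpos m hl.2
        rw [h4]
        refine hall _ _ _ _ h1 h3 (fun heq => hlk ?_)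
        have : e n = e m := heq
        rw [e.injective this]
  · change ∑' n, A.r (n + 2) < ε
    simp_rw [hr2]
    rw [e.tsum_eq rad]
    exact hradT
  · intro x d hd
    refine bpd_zero _ x d hd (fun M => ?_)
    obtain ⟨m, hm⟩ := exists_nat_ge M
    have hfar : ∀ z ∈ A.cheeseSet, ∀ p ∈ P m, ρ m ≤ ‖z - gp (h m) p‖ := by
      intro z hz p hp
      have h1 := hsub (m + 1) hz
      rw [hXs1] at h1
      by_contra hcon
      refine h1.2 (mem_biUnion hp ?_)
      rw [mem_ball, dist_eq_norm]
      exact not_le.1 hcon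
    refine ⟨P m, h m, ρ m, hρ m, ?_, ?_, ?_⟩
    · intro z hz p hp heq
      have := hfar z hz p hp
      rw [heq, sub_self, norm_zero] at this
      exact absurd (hρ m) (not_lt.2 this)
    · intro z hz
      exact hDu m (Xs m) z (hsub m hz) (hfar z hz)
    · exact hm.trans (hDl m (Xs m) x (hsub m x.2) (hfar x x.2))
end

section
/- Let A = ((a_n, r_n)) be a classical abstract Swiss cheese and suppose that ∑_{n ∈ S_A} r_n log(1/r_n) < ∞. Then for Lebesgue-almost every point z of X_A there exists a non-zero bounded point derivation on R(X_A) at z. -/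
open Metric Set

open Metric Set

lemma sc_annulus (s R : ℝ) (hs : 0 < s) (hsR : s ≤ R) :
    ∫⁻ z : ℂ, ENNReal.ofReal ((Ico s R).indicator (fun y : ℝ => (y^2)⁻¹) ‖z‖)
      = ENNReal.ofReal (2 * Real.pi * Real.log (R / s)) := by
  have key : ∀ y ∈ Ioi (0:ℝ), y ^ (Module.finrank ℝ ℂ - 1) • (Ico s R).indicator (fun y : ℝ => (y^2)⁻¹) y
      = (Ico s R).indicator (fun y : ℝ => y⁻¹) y := by
    intro y hy
    have hy' : y ≠ 0 := ne_of_gt hy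
    by_cases h : y ∈ Ico s R
    · simp only [indicator_of_mem h, Complex.finrank_real_complex, smul_eq_mul]
      field_simp
      norm_num
    · simp [indicator_of_notMem h]
  have hsub : Ico s R ⊆ Ioi 0 := fun y hy => lt_of_lt_of_le hs hy.1
  have hcont : ContinuousOn (fun y : ℝ => y⁻¹) (Icc s R) :=
    continuousOn_inv₀.mono fun y hy => ne_of_gt (lt_of_lt_of_le hs hy.1)
  have hint : MeasureTheory.IntegrableOn (fun y : ℝ => y⁻¹) (Ico s R) :=
    (hcont.integrableOn_Icc).mono_set Ico_subset_Icc_self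
  rw [← MeasureTheory.ofReal_integral_eq_lintegral_ofReal]
  · congr 1
    rw [MeasureTheory.integral_fun_norm_addHaar MeasureTheory.volume
      ((Ico s R).indicator (fun y : ℝ => (y^2)⁻¹))]
    rw [MeasureTheory.setIntegral_congr_fun measurableSet_Ioi key]
    rw [MeasureTheory.setIntegral_indicator measurableSet_Ico, inter_eq_right.mpr hsub]
    rw [MeasureTheory.integral_Ico_eq_integral_Ioc, ← intervalIntegral.integral_of_le hsR,
      integral_inv_of_pos hs (hs.trans_le hsR)]
    simp [MeasureTheory.measureReal_def, Complex.volume_ball]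
    ring
  · rw [MeasureTheory.integrable_fun_norm_addHaar MeasureTheory.volume
      (f := (Ico s R).indicator (fun y : ℝ => (y^2)⁻¹))]
    rw [MeasureTheory.integrableOn_congr_fun key measurableSet_Ioi]
    exact ((MeasureTheory.integrable_indicator_iff measurableSet_Ico).mpr hint).integrableOn
  · exact Filter.Eventually.of_forall fun z => indicator_nonneg (fun y _ => by positivity) _

lemma sc_ae_summable (a : ℕ → ℂ) (r : ℕ → ℝ) (hr0 : ∀ n, 0 ≤ r n) (hr : Summable r)
    (hlog : Summable fun n => if 0 < r n then r n * Real.log (1 / r n) else 0) (c : ℂ) (ρ : ℝ)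
    (ha : ∀ n, 0 < r n → a n ∈ ball c ρ) :
    ∀ᵐ z : ℂ, z ∈ ball c ρ → Summable fun n => r n / (‖z - a n‖ - r n)^2 := by
  classical
  obtain ⟨R, hR2, hR1, hR0⟩ : ∃ R : ℝ, (∀ n, 2 * r n ≤ R) ∧ 2 * ρ ≤ R ∧ 0 < R := by
    refine ⟨2 * (∑' n, r n) + 2 * |ρ| + 1, fun n => ?_, ?_, ?_⟩
    · have := hr.le_tsum n (fun j _ => hr0 j)
      have := abs_nonneg ρ
      linarith
    · have : 0 ≤ ∑' n, r n := tsum_nonneg hr0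
      have := le_abs_self ρ
      linarith
    · have : 0 ≤ ∑' n, r n := tsum_nonneg hr0
      have := abs_nonneg ρ
      linarith
  have hBC : ∀ᵐ z : ℂ, {n | z ∈ ball (a n) (2 * r n)}.Finite := by
    apply MeasureTheory.ae_finite_setOfPred_mem
    have hs : Summable fun n => (2 * r n)^2 * Real.pi := by
      have : Summable fun n => r n ^ 2 := by
        refine Summable.of_nonneg_of_le (fun n => sq_nonneg _) (fun n => ?_) (hr.mul_left R)
        nlinarith [hr0 n, hR2 n]
      refine (this.mul_left (4 * Real.pi)).congr fun n => ?_
      ring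
    convert hs.tsum_ofReal_ne_top using 3 with n
    rw [Complex.volume_ball, ENNReal.ofReal_mul (p := (2 * r n)^2) (by positivity), ENNReal.ofReal_pow (by linarith [hr0 n])]
    congr 1
    rw [ENNReal.ofReal, ← NNReal.coe_real_pi, Real.toNNReal_coe]
  set h : ℕ → ℂ → ENNReal := fun n z =>
    ENNReal.ofReal (4 * r n) * ENNReal.ofReal ((Ico (2 * r n) R).indicator (fun y : ℝ => (y^2)⁻¹) ‖z - a n‖) with hh
  have hmeas : ∀ n, Measurable (h n) := by
    intro n
    have h1 : Measurable ((Ico (2 * r n) R).indicator (fun y : ℝ => (y^2)⁻¹)) :=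
      Measurable.indicator (by fun_prop) measurableSet_Ico
    have h2 : Measurable fun z : ℂ => ‖z - a n‖ := by fun_prop
    exact (h1.comp h2).ennreal_ofReal.const_mul _
  have hintg : ∀ n, ∫⁻ z, h n z = ENNReal.ofReal (8 * Real.pi * (Real.log (R/2) * r n +
      if 0 < r n then r n * Real.log (1 / r n) else 0)) := by
    intro n
    rcases (hr0 n).eq_or_lt with h0 | h0
    · simp [hh, ← h0]
    · rw [MeasureTheory.lintegral_const_mul' _ _ ENNReal.ofReal_ne_top]
      rw [MeasureTheory.lintegral_sub_right_eq_self (fun z => ENNReal.ofReal ((Ico (2 * r n) R).indicator (fun y : ℝ => (y^2)⁻¹) ‖z‖)) (a n)]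
      rw [sc_annulus _ _ (by linarith) (hR2 n), ← ENNReal.ofReal_mul (by linarith), if_pos h0]
      congr 1
      rw [Real.log_div hR0.ne' (by positivity), Real.log_div hR0.ne' (by positivity),
        Real.log_mul (by positivity) (by positivity), Real.log_div (by positivity) (by positivity), Real.log_one]
      ring
  have hsum : ∑' n, ∫⁻ z, h n z ≠ ⊤ := by
    simp_rw [hintg]
    exact (((hr.mul_left _).add hlog).mul_left _).tsum_ofReal_ne_top
  rw [← MeasureTheory.lintegral_tsum (fun n => (hmeas n).aemeasurable)] at hsum
  have hfin := MeasureTheory.ae_lt_top (Measurable.tsum hmeas) hsum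
  filter_upwards [hBC, hfin] with z hz1 hz2 hz
  have hS := ENNReal.summable_toReal hz2.ne
  refine (summable_congr_cofinite ?_).mp ((Summable.of_nonneg_of_le
    (g := fun n => if z ∈ ball (a n) (2 * r n) then 0 else r n / (‖z - a n‖ - r n)^2) ?_ ?_ hS))
  · filter_upwards [hz1.compl_mem_cofinite] with n hn
    exact if_neg hn
  · intro n; split_ifs
    · rfl
    · have := hr0 n
      positivity
  · intro n; split_ifs with hn
    · exact ENNReal.toReal_nonneg
    rcases (hr0 n).eq_or_lt with h0 | h0
    · simp [← h0]
    have hn' : 2 * r n ≤ ‖z - a n‖ := by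
      rw [mem_ball, dist_eq_norm] at hn; linarith
    have hlt : ‖z - a n‖ < R := by
      have h1 := ha n h0
      rw [mem_ball] at h1 hz
      rw [← dist_eq_norm]
      have := dist_triangle_right z (a n) c
      linarith
    simp only [hh]
    rw [indicator_of_mem (show ‖z - a n‖ ∈ Ico (2 * r n) R from ⟨hn', hlt⟩), ENNReal.toReal_mul,
      ENNReal.toReal_ofReal (by positivity), ENNReal.toReal_ofReal (by positivity)]
    have h3 : 0 < ‖z - a n‖ := by linarith
    have h4 : 0 < ‖z - a n‖ - r n := by linarith
    rw [← div_eq_mul_inv, div_le_div_iff₀ (by positivity) (by positivity)]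
    nlinarith [mul_nonneg h0.le (sub_nonneg.mpr hn')]

def ScGood {ι : Type*} (c : ℂ) (R : ℝ) (F : Finset ι) (a : ι → ℂ) (r : ι → ℝ) (b : ℂ) : Prop :=
  (b ∉ closedBall c R ∧ ∀ n ∈ F, b ∉ closedBall (a n) (r n)) ∨
  (b ∈ ball c R ∧ ∃ n ∈ F, b ∈ ball (a n) (r n) ∧ ∀ m ∈ F, m ≠ n → b ∉ closedBall (a m) (r m))

lemma ScGood.not_sphere {ι : Type*} {c : ℂ} {R : ℝ} {F : Finset ι} {a : ι → ℂ} {r : ι → ℝ} {b : ℂ}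
    (h : ScGood c R F a r b) : b ∉ sphere c R ∧ ∀ n ∈ F, b ∉ sphere (a n) (r n) := by
  rcases h with ⟨h1, h2⟩ | ⟨h1, n, hn, h2, h3⟩
  · exact ⟨fun h => h1 (sphere_subset_closedBall h), fun n hn h => h2 n hn (sphere_subset_closedBall h)⟩
  · refine ⟨fun h => ?_, fun m hm h => ?_⟩
    · rw [mem_sphere] at h; rw [mem_ball] at h1; linarith
    · by_cases hmn : m = n
      · subst hmn
        rw [mem_sphere] at h; rw [mem_ball] at h2; linarith
      · exact h3 m hm hmn (sphere_subset_closedBall h)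

def ScRP {ι : Type*} (c : ℂ) (R : ℝ) (F : Finset ι) (a : ι → ℂ) (r : ι → ℝ) (f : ℂ → ℂ) : Prop :=
  (∮ w in C(c, R), f w) = ∑ n ∈ F, ∮ w in C(a n, r n), f w

lemma sc_inv_out {c b : ℂ} {R : ℝ} (hR : 0 ≤ R) (h : b ∉ closedBall c R) :
    (∮ w in C(c, R), (w - b)⁻¹) = 0 := by
  apply Complex.circleIntegral_eq_zero_of_differentiable_on_off_countable hR countable_empty
  · refine ContinuousOn.inv₀ (by fun_prop) fun w hw h0 => h ?_
    rw [sub_eq_zero] at h0; exact h0 ▸ hw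
  · rintro w ⟨hw, -⟩
    refine DifferentiableAt.inv (by fun_prop) fun h0 => h ?_
    rw [sub_eq_zero] at h0; exact h0 ▸ ball_subset_closedBall hw

section
variable {ι : Type*} {c : ℂ} {R : ℝ} {F : Finset ι} {a : ι → ℂ} {r : ι → ℝ}

lemma sc_zpow (hR : 0 ≤ R) (hr : ∀ n ∈ F, 0 ≤ r n) {b : ℂ}
    (h : ScGood c R F a r b) (k : ℤ) : ScRP c R F a r (fun w => (w - b) ^ k) := by
  unfold ScRP
  by_cases hk : k = -1
  · subst hk
    simp only [zpow_neg_one]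
    rcases h with ⟨h1, h2⟩ | ⟨h1, n, hn, h2, h3⟩
    · rw [sc_inv_out hR h1, Finset.sum_eq_zero]
      intro n hn
      exact sc_inv_out (hr n hn) (h2 n hn)
    · rw [circleIntegral.integral_sub_inv_of_mem_ball h1, Finset.sum_eq_single_of_mem n hn,
        circleIntegral.integral_sub_inv_of_mem_ball h2]
      intro m hm hmn
      exact sc_inv_out (hr m hm) (h3 m hm hmn)
  · rw [circleIntegral.integral_sub_zpow_of_ne hk, Finset.sum_eq_zero]
    intro n _
    exact circleIntegral.integral_sub_zpow_of_ne hk _ _ _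

lemma sc_rp_congr (hR : 0 ≤ R) (hr : ∀ n ∈ F, 0 ≤ r n) {f g : ℂ → ℂ}
    (h0 : EqOn f g (sphere c R)) (h1 : ∀ n ∈ F, EqOn f g (sphere (a n) (r n)))
    (hf : ScRP c R F a r f) : ScRP c R F a r g := by
  unfold ScRP at *
  rw [← circleIntegral.integral_congr hR h0, hf]
  exact Finset.sum_congr rfl fun n hn => circleIntegral.integral_congr (hr n hn) (h1 n hn)

def ScInt (c : ℂ) (R : ℝ) (F : Finset ι) (a : ι → ℂ) (r : ι → ℝ) (f : ℂ → ℂ) : Prop :=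
  CircleIntegrable f c R ∧ ∀ n ∈ F, CircleIntegrable f (a n) (r n)

lemma sc_rp_sum {κ : Type*} (s : Finset κ) (f : κ → ℂ → ℂ) 
    (hi : ∀ i ∈ s, ScInt c R F a r (f i)) (hf : ∀ i ∈ s, ScRP c R F a r (f i)) :
    ScRP c R F a r (fun w => ∑ i ∈ s, f i w) := by
  unfold ScRP at *
  rw [circleIntegral.integral_fun_sum fun i hi' => (hi i hi').1, Finset.sum_congr rfl hf,
    Finset.sum_comm]
  refine Finset.sum_congr rfl fun n hn => ?_
  rw [circleIntegral.integral_fun_sum fun i hi' => (hi i hi').2 n hn]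

lemma sc_rp_sub {f g : ℂ → ℂ} 
    (hi : ScInt c R F a r f) (hi' : ScInt c R F a r g) (hf : ScRP c R F a r f) (hg : ScRP c R F a r g) :
    ScRP c R F a r (fun w => f w - g w) := by
  unfold ScRP at *
  rw [circleIntegral.integral_sub hi.1 hi'.1, hf, hg, ← Finset.sum_sub_distrib]
  refine Finset.sum_congr rfl fun n hn => ?_
  rw [circleIntegral.integral_sub (hi.2 n hn) (hi'.2 n hn)]

lemma sc_rp_mul {f : ℂ → ℂ} (x : ℂ) (hf : ScRP c R F a r f) :
    ScRP c R F a r (fun w => x * f w) := by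
  unfold ScRP at *
  simp only [circleIntegral.integral_const_mul, hf, Finset.mul_sum]

lemma sc_cont_on (p : Polynomial ℂ) (s : Multiset ℂ) (S : Set ℂ) (hs : ∀ b ∈ s, b ∉ S) :
    ContinuousOn (fun w => p.eval w * (s.map (fun b => (w - b)⁻¹)).prod) S := by
  refine ContinuousOn.mul p.continuous.continuousOn ?_
  induction s using Multiset.induction with
  | empty => simpa using continuousOn_const
  | cons b t ih =>
    simp only [Multiset.map_cons, Multiset.prod_cons]
    refine ContinuousOn.mul (ContinuousOn.inv₀ (by fun_prop) fun w hw h0 => ?_)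
      (ih fun b hb => hs b (Multiset.mem_cons_of_mem hb))
    rw [sub_eq_zero] at h0
    exact hs b (Multiset.mem_cons_self b t) (h0 ▸ hw)

lemma sc_int (hR : 0 ≤ R) (hr : ∀ n ∈ F, 0 ≤ r n) (p : Polynomial ℂ) (s : Multiset ℂ)
    (hs : ∀ b ∈ s, ScGood c R F a r b) :
    ScInt c R F a r (fun w => p.eval w * (s.map (fun b => (w - b)⁻¹)).prod) :=
  ⟨(sc_cont_on p s _ fun b hb => (hs b hb).not_sphere.1).circleIntegrable hR,
   fun n hn => (sc_cont_on p s _ fun b hb => (hs b hb).not_sphere.2 n hn).circleIntegrable (hr n hn)⟩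

lemma sc_poly (hR : 0 ≤ R) (hr : ∀ n ∈ F, 0 ≤ r n) (p : Polynomial ℂ) :
    ScRP c R F a r (fun w => p.eval w) := by
  have key : ∀ (x : ℂ) (t : ℝ), 0 ≤ t → (∮ w in C(x, t), p.eval w) = 0 := fun x t ht =>
    Complex.circleIntegral_eq_zero_of_differentiable_on_off_countable ht countable_empty
      p.continuous.continuousOn fun w _ => p.differentiableAt
  unfold ScRP
  rw [key _ _ hR, Finset.sum_eq_zero fun n hn => key _ _ (hr n hn)]

lemma sc_rat (hR : 0 ≤ R) (hr : ∀ n ∈ F, 0 ≤ r n) (p : Polynomial ℂ) (N : ℕ) : ∀ (s : Multiset ℂ),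
    s.card = N → (∀ b ∈ s, ScGood c R F a r b) →
    ScRP c R F a r (fun w => p.eval w * (s.map (fun b => (w - b)⁻¹)).prod) := by
  induction N with
  | zero =>
    intro s hs _
    rw [Multiset.card_eq_zero] at hs
    subst hs
    simpa using sc_poly hR hr p
  | succ N ih =>
    intro s hcard hs
    obtain ⟨b, hb⟩ : ∃ b, b ∈ s := Multiset.card_pos_iff_exists_mem.mp (by omega)
    obtain ⟨t, rfl⟩ := Multiset.exists_cons_of_mem hb
    have hbg := hs b hb
    by_cases hall : ∀ x ∈ t, x = b
    · have ht := Multiset.eq_replicate_card.mpr hall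
      set m := t.card
      have hbn := hbg.not_sphere
      have key : ∀ w, w ≠ b → ∑ i ∈ Finset.range ((Polynomial.taylor b p).natDegree + 1),
          (Polynomial.taylor b p).coeff i * (w - b) ^ ((i : ℤ) - (m + 1 : ℕ)) =
          p.eval w * ((b ::ₘ t).map (fun b => (w - b)⁻¹)).prod := by
        intro w hw
        have hw' : w - b ≠ 0 := sub_ne_zero.mpr hw
        have h1 : p.eval w = (Polynomial.taylor b p).eval (w - b) := by
          simp [Polynomial.taylor_eval]
        rw [h1, Polynomial.eval_eq_sum_range, Finset.sum_mul]
        refine Finset.sum_congr rfl fun i _ => ?_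
        rw [ht, Multiset.map_cons, Multiset.map_replicate, Multiset.prod_cons, Multiset.prod_replicate,
          zpow_sub₀ hw', zpow_natCast, zpow_natCast, pow_succ, inv_pow]
        field_simp
      refine sc_rp_congr hR hr (fun w hw => key w ?_) (fun n hn w hw => key w ?_)
        (sc_rp_sum _ _ (fun i _ => ?_) (fun i _ => sc_rp_mul _ (sc_zpow hR hr hbg _)))
      · rintro rfl; exact hbn.1 hw
      · rintro rfl; exact hbn.2 n hn hw
      · refine ⟨ContinuousOn.circleIntegrable hR ?_, fun n hn => ContinuousOn.circleIntegrable (hr n hn) ?_⟩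
        · refine continuousOn_const.mul (ContinuousOn.zpow₀ (by fun_prop) _ fun w hw => Or.inl ?_)
          rw [sub_ne_zero]; rintro rfl; exact hbn.1 hw
        · refine continuousOn_const.mul (ContinuousOn.zpow₀ (by fun_prop) _ fun w hw => Or.inl ?_)
          rw [sub_ne_zero]; rintro rfl; exact hbn.2 n hn hw
    · push Not at hall
      obtain ⟨x, hx, hxb⟩ := hall
      obtain ⟨u, rfl⟩ := Multiset.exists_cons_of_mem hx
      have hxg := hs x (Multiset.mem_cons_of_mem hx)
      have hug : ∀ y ∈ u, ScGood c R F a r y := fun y hy =>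
        hs y (Multiset.mem_cons_of_mem (Multiset.mem_cons_of_mem hy))
      have g1 : ∀ y ∈ b ::ₘ u, ScGood c R F a r y := by
        intro y hy; rcases Multiset.mem_cons.mp hy with rfl | hy
        · exact hbg
        · exact hug y hy
      have g2 : ∀ y ∈ x ::ₘ u, ScGood c R F a r y := by
        intro y hy; rcases Multiset.mem_cons.mp hy with rfl | hy
        · exact hxg
        · exact hug y hy
      have r1 := ih (b ::ₘ u) (by simpa using hcard) g1
      have r2 := ih (x ::ₘ u) (by simpa using hcard) g2
      have key : ∀ w, w ≠ b → w ≠ x → (b - x)⁻¹ * (p.eval w * ((b ::ₘ u).map (fun b => (w - b)⁻¹)).prod -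
          p.eval w * ((x ::ₘ u).map (fun b => (w - b)⁻¹)).prod) =
          p.eval w * ((b ::ₘ x ::ₘ u).map (fun b => (w - b)⁻¹)).prod := by
        intro w h1 h2
        have h1' := sub_ne_zero.mpr h1
        have h2' := sub_ne_zero.mpr h2
        have h3' := sub_ne_zero.mpr hxb.symm
        simp only [Multiset.map_cons, Multiset.prod_cons]
        field_simp
        ring
      refine sc_rp_congr hR hr (fun w hw => key w ?_ ?_) (fun n hn w hw => key w ?_ ?_)
        (sc_rp_mul (b - x)⁻¹ (sc_rp_sub (sc_int hR hr p _ g1) (sc_int hR hr p _ g2) r1 r2))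
      · rintro rfl; exact hbg.not_sphere.1 hw
      · rintro rfl; exact hxg.not_sphere.1 hw
      · rintro rfl; exact hbg.not_sphere.2 n hn hw
      · rintro rfl; exact hxg.not_sphere.2 n hn hw
end
lemma sc_deriv {c : ℂ} {R : ℝ} {F : Finset ℕ} {a : ℕ → ℂ} {r : ℕ → ℝ}
    (hR : 0 ≤ R) (hr : ∀ n ∈ F, 0 ≤ r n) (p q : Polynomial ℂ) (z : ℂ) (hq : q.eval z ≠ 0)
    (hz : z ∈ ball c R) (hzF : ∀ n ∈ F, z ∉ closedBall (a n) (r n))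
    (hroots : ∀ b ∈ q.roots, ScGood c R F a r b) :
    (∮ w in C(c, R), ((w - z)^2)⁻¹ * (p.eval w / q.eval w)) -
      ∑ n ∈ F, (∮ w in C(a n, r n), ((w - z)^2)⁻¹ * (p.eval w / q.eval w)) =
      (2 * Real.pi * Complex.I) * deriv (fun w => p.eval w / q.eval w) z := by
  have hq0 : q ≠ 0 := by rintro rfl; simp at hq
  have hUo : IsOpen {w | q.eval w ≠ 0} := isOpen_ne_fun q.continuous continuous_const
  obtain ⟨ε, hε, hεU⟩ := Metric.nhds_basis_closedBall.mem_iff.mp (hUo.mem_nhds hq)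
  set a' : Option ℕ → ℂ := fun o => o.elim z a
  set r' : Option ℕ → ℝ := fun o => o.elim ε r
  have hr' : ∀ n ∈ F.insertNone, 0 ≤ r' n := by
    rintro (_ | n) hn
    · exact hε.le
    · exact hr n (by simpa using hn)
  have hzg : ScGood c R F.insertNone a' r' z := by
    refine Or.inr ⟨hz, none, by simp, mem_ball_self hε, ?_⟩
    rintro (_ | n) hn h
    · exact absurd rfl h
    · exact hzF n (by simpa using hn)
  have hg : ∀ b ∈ z ::ₘ z ::ₘ q.roots, ScGood c R F.insertNone a' r' b := by
    intro b hb
    rw [Multiset.mem_cons, Multiset.mem_cons, ← or_assoc, or_self] at hb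
    rcases hb with rfl | hb
    · exact hzg
    · have hbz : b ∉ closedBall z ε := fun h => hεU h ((Polynomial.mem_roots hq0).mp hb)
      rcases hroots b hb with ⟨h1, h2⟩ | ⟨h1, n, hn, h2, h3⟩
      · refine Or.inl ⟨h1, ?_⟩
        rintro (_ | n) hn
        · exact hbz
        · exact h2 n (by simpa using hn)
      · refine Or.inr ⟨h1, some n, by simpa using hn, h2, ?_⟩
        rintro (_ | m) hm hmn
        · exact hbz
        · exact h3 m (by simpa using hm) (by simpa using hmn)
  have hfun : (fun w => ((w - z)^2)⁻¹ * (p.eval w / q.eval w)) = fun w => q.leadingCoeff⁻¹ *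
      (p.eval w * ((z ::ₘ z ::ₘ q.roots).map (fun b => (w - b)⁻¹)).prod) := by
    funext w
    have h1 : q.eval w = q.leadingCoeff * (q.roots.map (fun b => w - b)).prod :=
      (IsAlgClosed.splits q).eval_eq_prod_roots w
    rw [h1, Multiset.map_cons, Multiset.map_cons, Multiset.prod_cons, Multiset.prod_cons,
      Multiset.prod_map_inv, div_eq_mul_inv, mul_inv, sq, mul_inv]
    ring
  have main := sc_rp_mul q.leadingCoeff⁻¹ (sc_rat hR hr' p _ _ rfl hg)
  rw [← hfun] at main
  unfold ScRP at main
  rw [main, Finset.sum_insertNone]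
  have hC := Complex.two_pi_I_inv_smul_circleIntegral_sub_sq_inv_smul_of_differentiable hUo hεU
    (f := fun w => p.eval w / q.eval w)
    (fun w hw => (p.differentiableAt.div q.differentiableAt hw).differentiableWithinAt)
    (mem_ball_self hε)
  rw [← hC]
  have : (2 * Real.pi * Complex.I : ℂ) ≠ 0 := Complex.two_pi_I_ne_zero
  simp only [smul_eq_mul, a', r', Option.elim]
  field_simp
  ring

lemma sc_T (X : Set ℂ) [CompactSpace X] (a z : ℂ) (r : ℝ) (hr : 0 ≤ r)
    (hs : 0 < r → sphere a r ⊆ X) (hz : 0 < r → z ∉ sphere a r) :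
    ∃ T : C(X, ℂ) →L[ℂ] ℂ, (∀ (f : C(X, ℂ)) (g : ℂ → ℂ), (∀ x : X, f x = g x) →
      T f = ∮ w in C(a, r), ((w - z)^2)⁻¹ * g w) ∧
      ‖T‖ ≤ 2 * Real.pi * (r / (‖z - a‖ - r)^2) := by
  rcases hr.eq_or_lt with h0 | h0
  · refine ⟨0, fun f g _ => ?_, by simp [← h0]⟩
    simp [← h0]
  specialize hs h0
  specialize hz h0
  classical
  set e : C(X, ℂ) → ℂ → ℂ := fun f w => if h : w ∈ X then f ⟨w, h⟩ else 0 with he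
  have hcont : ∀ f, CircleIntegrable (fun w => ((w - z)^2)⁻¹ * e f w) a r := by
    intro f
    refine ContinuousOn.circleIntegrable hr (ContinuousOn.mul ?_ ?_)
    · refine ContinuousOn.inv₀ (by fun_prop) fun w hw h => hz ?_
      rw [pow_eq_zero_iff (by norm_num), sub_eq_zero] at h
      exact h ▸ hw
    · refine ContinuousOn.mono ?_ hs
      rw [continuousOn_iff_continuous_domRestrict]
      convert f.continuous using 1
      funext x
      simp [he]
  have hb : ∀ f, ∀ w ∈ sphere a r, ‖((w - z)^2)⁻¹ * e f w‖ ≤ ((‖z - a‖ - r)^2)⁻¹ * ‖f‖ := by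
    intro f w hw
    rw [norm_mul, norm_inv, norm_pow]
    have hne : ‖z - a‖ - r ≠ 0 := fun h => hz (by rw [mem_sphere, dist_eq_norm]; linarith)
    have h1 : |‖z - a‖ - r| ≤ ‖w - z‖ := by
      rw [mem_sphere, dist_eq_norm] at hw
      rw [← hw, norm_sub_rev w z]
      have := abs_norm_sub_norm_le (z - a) (w - a)
      simpa using this
    have h2 : (‖z - a‖ - r)^2 ≤ ‖w - z‖^2 := by
      rw [← sq_abs (‖z - a‖ - r)]
      gcongr
    have h3 : 0 < (‖z - a‖ - r)^2 := by positivity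
    gcongr
    simp only [he, dif_pos (hs hw)]
    exact f.norm_coe_le_norm _
  let T0 : C(X, ℂ) →ₗ[ℂ] ℂ :=
    { toFun := fun f => ∮ w in C(a, r), ((w - z)^2)⁻¹ * e f w
      map_add' := by
        intro f g
        rw [← circleIntegral.integral_add (hcont f) (hcont g)]
        congr 1; funext w
        by_cases h : w ∈ X <;> simp [he, h, mul_add]
      map_smul' := by
        intro k f
        simp only [RingHom.id_apply, smul_eq_mul]
        rw [← circleIntegral.integral_const_mul]
        congr 1; funext w
        by_cases h : w ∈ X
        · simp [he, h]; ring
        · simp [he, h] }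
  refine ⟨T0.mkContinuous (2 * Real.pi * (r / (‖z - a‖ - r)^2)) fun f => ?_, fun f g hfg => ?_, ?_⟩
  · have := circleIntegral.norm_integral_le_of_norm_le_const hr (hb f)
    calc ‖T0 f‖ ≤ _ := this
      _ = _ := by ring
  · change (∮ w in C(a, r), ((w - z)^2)⁻¹ * e f w) = _
    refine circleIntegral.integral_congr hr fun w hw => ?_
    simp only [he, dif_pos (hs hw), hfg]
  · exact LinearMap.mkContinuous_norm_le _ (by positivity) _

lemma sc_adjoin (X : Set ℂ) (f : C(X, ℂ)) (hf : f ∈ Algebra.adjoin ℂ (R0set X)) : f ∈ R0set X := by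
  induction hf using Algebra.adjoin_induction with
  | mem f hf => exact hf
  | algebraMap k => exact ⟨Polynomial.C k, 1, by simp, by simp⟩
  | add f g _ _ hf hg =>
    obtain ⟨p, q, hq, h⟩ := hf
    obtain ⟨p', q', hq', h'⟩ := hg
    refine ⟨p * q' + q * p', q * q', fun x => ?_, fun x => ?_⟩
    · simpa using ⟨hq x, hq' x⟩
    · simp [h, h', div_add_div _ _ (hq x) (hq' x)]
  | mul f g _ _ hf hg =>
    obtain ⟨p, q, hq, h⟩ := hf
    obtain ⟨p', q', hq', h'⟩ := hg
    refine ⟨p * p', q * q', fun x => ?_, fun x => ?_⟩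
    · simpa using ⟨hq x, hq' x⟩
    · simp [h, h', div_mul_div_comm]

lemma sc_bpd (X : Set ℂ) [CompactSpace X] (z : ℂ) (hz : z ∈ X) (D : C(X, ℂ) →L[ℂ] ℂ)
    (hD : ∀ (f : C(X, ℂ)) (p q : Polynomial ℂ), (∀ x : X, q.eval (x : ℂ) ≠ 0) →
      (∀ x : X, f x = p.eval (x : ℂ) / q.eval (x : ℂ)) →
      D f = deriv (fun w => p.eval w / q.eval w) z) :
    ∃ d : Rx X →L[ℂ] ℂ, d ≠ 0 ∧ IsBPD X ⟨z, hz⟩ d := by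
  have leib : ∀ f ∈ R0set X, ∀ g ∈ R0set X, D (f * g) = f ⟨z, hz⟩ * D g + D f * g ⟨z, hz⟩ := by
    rintro f ⟨p, q, hq, h⟩ g ⟨p', q', hq', h'⟩
    rw [hD f p q hq h, hD g p' q' hq' h', hD (f * g) (p * p') (q * q')
      (fun x => by simpa using ⟨hq x, hq' x⟩) (fun x => by simp [h, h', div_mul_div_comm]), h, h']
    have e : (fun w => (p * p').eval w / (q * q').eval w) =
        (fun w => p.eval w / q.eval w) * (fun w => p'.eval w / q'.eval w) := by
      funext w; simp [div_mul_div_comm]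
    have d1 : DifferentiableAt ℂ (fun w => p.eval w / q.eval w) z :=
      p.differentiableAt.div q.differentiableAt (hq ⟨z, hz⟩)
    have d2 : DifferentiableAt ℂ (fun w => p'.eval w / q'.eval w) z :=
      p'.differentiableAt.div q'.differentiableAt (hq' ⟨z, hz⟩)
    rw [e, deriv_mul d1 d2]
    ring
  set S : Set C(X, ℂ) := (Algebra.adjoin ℂ (R0set X) : Set C(X, ℂ)) with hS
  have leib1 : ∀ f ∈ closure S, ∀ g ∈ S, D (f * g) = f ⟨z, hz⟩ * D g + D f * g ⟨z, hz⟩ := by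
    intro f hf g hg
    have hcl : IsClosed {f : C(X, ℂ) | D (f * g) = f ⟨z, hz⟩ * D g + D f * g ⟨z, hz⟩} :=
      isClosed_eq (by fun_prop) (by fun_prop)
    exact closure_minimal (fun f hf => leib f (sc_adjoin X f hf) g (sc_adjoin X g hg)) hcl hf
  have leib2 : ∀ f ∈ closure S, ∀ g ∈ closure S, D (f * g) = f ⟨z, hz⟩ * D g + D f * g ⟨z, hz⟩ := by
    intro f hf g hg
    have hcl : IsClosed {g : C(X, ℂ) | D (f * g) = f ⟨z, hz⟩ * D g + D f * g ⟨z, hz⟩} :=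
      isClosed_eq (by fun_prop) (by fun_prop)
    exact closure_minimal (fun g hg => leib1 f hf g hg) hcl hg
  refine ⟨D.comp (Submodule.subtypeL (Subalgebra.toSubmodule (Rx X))), ?_, ?_⟩
  · intro h0
    set f : C(X, ℂ) := ⟨fun x => (x : ℂ), continuous_subtype_val⟩
    have hf : f ∈ Rx X := subset_closure (Algebra.subset_adjoin
      ⟨Polynomial.X, 1, by simp, by simp [f]⟩)
    have h1 := DFunLike.congr_fun h0 (⟨f, hf⟩ : Rx X)
    have h2 : D f = 0 := h1
    rw [hD f Polynomial.X 1 (by simp) (by simp [f])] at h2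
    simp at h2
  · intro f g
    exact leib2 f f.2 g g.2

lemma sc_main (A : SwissCheese) (hA : A.IsClassical) (z : ℂ) (hz : z ∈ A.cheeseSet)
    (hz0 : z ∈ ball (A.a 0) (A.r 0))
    (hzn : ∀ n, 0 < A.r n → z ∉ sphere (A.a n) (A.r n))
    (hsum : Summable fun n => A.r (n+1) / (‖z - A.a (n+1)‖ - A.r (n+1))^2) :
    ∃ d : Rx A.cheeseSet →L[ℂ] ℂ, d ≠ 0 ∧ IsBPD A.cheeseSet ⟨z, hz⟩ d := by
  classical
  obtain ⟨-, hr0, hcl⟩ := hA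
  have hsph0 : sphere (A.a 0) (A.r 0) ⊆ A.cheeseSet := by
    intro w hw
    refine ⟨sphere_subset_closedBall hw, fun h => ?_⟩
    simp only [mem_iUnion] at h
    obtain ⟨n, hn, h⟩ := h
    have hpos : 0 < A.r n := pos_of_mem_ball h
    have := (hcl n ⟨hn, hpos⟩).1 (ball_subset_closedBall h)
    rw [mem_ball] at this; rw [mem_sphere] at hw; linarith
  have hsph : ∀ n, 0 < A.r (n+1) → sphere (A.a (n+1)) (A.r (n+1)) ⊆ A.cheeseSet := by
    intro n hn w hw
    have hs : n + 1 ∈ A.sig := ⟨by omega, hn⟩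
    refine ⟨ball_subset_closedBall ((hcl _ hs).1 (sphere_subset_closedBall hw)), fun h => ?_⟩
    simp only [mem_iUnion] at h
    obtain ⟨m, hm, h⟩ := h
    have hpos : 0 < A.r m := pos_of_mem_ball h
    by_cases hmn : m = n + 1
    · subst hmn
      rw [mem_ball] at h; rw [mem_sphere] at hw; linarith
    · have := (hcl _ hs).2 m ⟨hm, hpos⟩ hmn
      exact (this.subset ⟨sphere_subset_closedBall hw, ball_subset_closedBall h⟩ : _)
  have hzc : ∀ n, 0 < A.r (n+1) → z ∉ closedBall (A.a (n+1)) (A.r (n+1)) := by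
    intro n hn h
    rw [mem_closedBall] at h
    rcases h.eq_or_lt with h | h
    · exact hzn _ hn h
    · refine hz.2 ?_
      simp only [mem_iUnion]
      exact ⟨n+1, by simp, h⟩
  obtain ⟨T0, hT0, -⟩ := sc_T A.cheeseSet (A.a 0) z (A.r 0) hr0.le (fun _ => hsph0) (hzn 0)
  choose T hT hTn using fun n => sc_T A.cheeseSet (A.a (n+1)) z (A.r (n+1)) (A.r_nonneg _) (hsph n) (hzn _)
  have hTs : Summable T := Summable.of_norm_bounded (hsum.mul_left _) hTn
  refine sc_bpd A.cheeseSet z hz ((2 * Real.pi * Complex.I : ℂ)⁻¹ • (T0 - ∑' n, T n)) ?_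
  intro f p q hq hf
  have hpi : (2 * Real.pi * Complex.I : ℂ) ≠ 0 := Complex.two_pi_I_ne_zero
  have hqz : q.eval z ≠ 0 := hq ⟨z, hz⟩
  have hq0 : q ≠ 0 := by rintro rfl; simp at hqz
  have hHS : HasSum (fun n => T n f) ((∑' n, T n) f) :=
    hTs.hasSum.mapL (ContinuousLinearMap.apply ℂ ℂ f)
  have hpole : ∀ b, ∃ n, b ∈ q.roots → b ∉ closedBall (A.a 0) (A.r 0) ∨
      b ∈ ball (A.a (n+1)) (A.r (n+1)) := by
    intro b
    by_cases h : b ∈ q.roots ∧ b ∈ closedBall (A.a 0) (A.r 0)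
    · have hbX : b ∉ A.cheeseSet := fun hb => hq ⟨b, hb⟩ ((Polynomial.mem_roots hq0).mp h.1)
      have : b ∈ ⋃ n ∈ Set.Ici 1, ball (A.a n) (A.r n) := by
        by_contra hc; exact hbX ⟨h.2, hc⟩
      simp only [mem_iUnion] at this
      obtain ⟨n, hn, hb⟩ := this
      obtain ⟨m, rfl⟩ : ∃ m, n = m + 1 := ⟨n - 1, by have : 1 ≤ n := hn; omega⟩
      exact ⟨m, fun _ => Or.inr hb⟩
    · exact ⟨0, fun hb => Or.inl fun hc => h ⟨hb, hc⟩⟩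
  choose N hN using hpole
  have hev : ∀ᶠ F : Finset ℕ in Filter.atTop, ∑ n ∈ F, T n f =
      T0 f - (2 * Real.pi * Complex.I) * deriv (fun w => p.eval w / q.eval w) z := by
    filter_upwards [Filter.eventually_ge_atTop (q.roots.toFinset.image N)] with F hF
    have h1 : ∑ n ∈ F, T n f = ∑ n ∈ F.filter (fun n => 0 < A.r (n+1)), T n f := by
      rw [Finset.sum_filter_of_ne]
      intro n _ hne
      refine (A.r_nonneg _).lt_of_ne fun h => hne ?_
      rw [hT n f (fun w => p.eval w / q.eval w) hf, ← h, circleIntegral.integral_radius_zero]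
    have h2 := sc_deriv (c := A.a 0) (R := A.r 0) (F := F.filter (fun n => 0 < A.r (n+1)))
      (a := fun n => A.a (n+1)) (r := fun n => A.r (n+1)) hr0.le (fun n _ => A.r_nonneg _) p q z hqz hz0
      (fun n hn => hzc n (Finset.mem_filter.mp hn).2) ?_
    · rw [h1, ← h2, hT0 f (fun w => p.eval w / q.eval w) hf, sub_sub_cancel]
      exact Finset.sum_congr rfl fun n _ => hT n f (fun w => p.eval w / q.eval w) hf
    · intro b hb
      rcases hN b hb with h | h
      · refine Or.inl ⟨h, fun n hn hc => h ?_⟩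
        exact ball_subset_closedBall ((hcl (n+1) ⟨by omega, (Finset.mem_filter.mp hn).2⟩).1 hc)
      · have hpos : 0 < A.r (N b + 1) := pos_of_mem_ball h
        have hs : N b + 1 ∈ A.sig := ⟨by omega, hpos⟩
        refine Or.inr ⟨(hcl _ hs).1 (ball_subset_closedBall h), N b, ?_, h, fun m hm hmn hc => ?_⟩
        · refine Finset.mem_filter.mpr ⟨hF (Finset.mem_image_of_mem N ?_), hpos⟩
          simpa using hb
        · have := (hcl _ hs).2 (m+1) ⟨by omega, (Finset.mem_filter.mp hm).2⟩ (by omega)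
          exact (this.subset ⟨ball_subset_closedBall h, hc⟩ : _)
  have hlim : (∑' n, T n) f =
      T0 f - (2 * Real.pi * Complex.I) * deriv (fun w => p.eval w / q.eval w) z :=
    tendsto_nhds_unique hHS (tendsto_const_nhds.congr' (hev.mono fun _ h => h.symm))
  simp only [smul_apply, sub_apply, hlim, smul_eq_mul]
  field_simp
  ring

/-- Browder: if `A` is a classical abstract Swiss cheese with
`∑_{n ∈ S_A} r_n log(1/r_n) < ∞`, then at Lebesgue-almost every point `z` of `X_A` there is
a non-zero bounded point derivation on `R(X_A)`. -/
theorem stmt_6 (A : SwissCheese) (hA : A.IsClassical)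
    (hlog : Summable fun n =>
      if 0 < A.r (n + 1) then A.r (n + 1) * Real.log (1 / A.r (n + 1)) else 0) :
    ∀ᵐ z ∂(MeasureTheory.volume : MeasureTheory.Measure ℂ),
      ∀ hz : z ∈ A.cheeseSet,
        ∃ d : Rx A.cheeseSet →L[ℂ] ℂ, d ≠ 0 ∧ IsBPD A.cheeseSet ⟨z, hz⟩ d := by
  have hsph : ∀ n, ∀ᵐ z : ℂ, 0 < A.r n → z ∉ sphere (A.a n) (A.r n) := by
    intro n
    have h0 : MeasureTheory.volume (sphere (A.a n) (A.r n)) = 0 :=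
      MeasureTheory.Measure.addHaar_sphere _ _ _
    filter_upwards [MeasureTheory.measure_eq_zero_iff_ae_notMem.mp h0] with z hz _ using hz
  have hs := sc_ae_summable (fun n => A.a (n+1)) (fun n => A.r (n+1)) (fun n => A.r_nonneg _) hA.1 hlog
    (A.a 0) (A.r 0) (fun n hn => (hA.2.2 (n+1) ⟨by omega, hn⟩).1 (mem_closedBall_self hn.le))
  filter_upwards [MeasureTheory.ae_all_iff.mpr hsph, hs] with z h1 h2 hz
  have hz0 : z ∈ ball (A.a 0) (A.r 0) := by
    have h3 := hz.1
    rw [mem_closedBall] at h3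
    exact h3.lt_of_ne (h1 0 hA.2.1)
  exact sc_main A hA z hz hz0 h1 (h2 hz0)
end

section
/- Let ε > 0, let a ∈ ℂ and r > 0, let Δ = ball(a, r) and E = ℂ ∖ Δ. Then there exist a sequence (a_n)_{n ≥ 1} in ℂ, a sequence (r_n)_{n ≥ 1} of positive real numbers, and a sequence (f_n)_{n ≥ 1} of rational functions such that, writing U = ⋃_{k ≥ 1} ball(a_k, r_k): (1) ∑_{n ≥ 1} r_n < ε; (2) every pole of f_n lies in U for each n (so each f_n defines a holomorphic function on ℂ ∖ U); (3) the sequence (f_n) converges uniformly on ℂ ∖ U to a function f with f(z) = 0 for every z ∈ E ∖ U and f(z) ≠ 0 for every z ∈ Δ ∖ U; (4) U ⊆ {z ∈ ℂ : r − ε < |z − a| < r}; (5) ball(a_m, r_m) ∩ ball(a_n, r_n) = ∅ for all m ≠ n. -/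
open Metric Set

lemma aux_root (w : ℂ) (N : ℕ) (hN : 0 < N) (s : ℝ) (hs0 : 0 < s) (hs : s ≤ 1/4)
    (h : ‖1 - w ^ N‖ < s) : ∃ ζ : ℂ, ζ ^ N = 1 ∧ ‖w - ζ‖ < 4 * s / N := by
  have hN' : (0:ℝ) < N := by exact_mod_cast hN
  have hN1 : (1:ℝ) ≤ N := by exact_mod_cast hN
  set v := w ^ N with hv
  have h1 : ‖v - 1‖ < s := by rw [norm_sub_rev]; exact h
  have hv0 : v ≠ 0 := by
    intro h0
    rw [h0] at h1
    simp at h1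
    linarith
  have hlog : ‖Complex.log v‖ < 2 * s := by
    have := Complex.norm_log_one_add_half_le_self (z := v - 1) (by linarith)
    rw [show 1 + (v - 1) = v by ring] at this
    linarith [norm_nonneg (v - 1)]
  set L := Complex.log v / N with hL
  have hLn : ‖L‖ < 2 * s / N := by
    rw [hL, norm_div, Complex.norm_natCast]
    gcongr
  have hLn1 : ‖L‖ ≤ 1 := by
    have : 2 * s / N ≤ 1 := by
      rw [div_le_one hN']; linarith
    linarith
  have hu : ‖Complex.exp L - 1‖ < 4 * s / N := by
    have := Complex.norm_exp_sub_one_le hLn1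
    have e : 4 * s / N = 2 * (2 * s / N) := by ring
    rw [e]; linarith
  have huN : Complex.exp L ^ N = v := by
    rw [← Complex.exp_nat_mul, hL, mul_div_cancel₀ _ (by exact_mod_cast hN.ne'), Complex.exp_log hv0]
  refine ⟨w / Complex.exp L, ?_, ?_⟩
  · rw [div_pow, huN, ← hv, div_self hv0]
  · have hz : (w / Complex.exp L) ^ N = 1 := by rw [div_pow, huN, ← hv, div_self hv0]
    have hz1 : ‖w / Complex.exp L‖ = 1 := by
      exact Complex.norm_eq_one_of_pow_eq_one hz hN.ne'
    have : w - w / Complex.exp L = (w / Complex.exp L) * (Complex.exp L - 1) := by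
      have := Complex.exp_ne_zero L
      field_simp
    rw [this, norm_mul, hz1, one_mul]
    exact hu

lemma aux_sep (N : ℕ) (hN : 0 < N) (ζ ξ : ℂ) (h1 : ζ ^ N = 1) (h2 : ξ ^ N = 1) (hne : ζ ≠ ξ) :
    2 / (N:ℝ) ≤ ‖ζ - ξ‖ := by
  have hN' : (0:ℝ) < N := by exact_mod_cast hN
  have hξ : ‖ξ‖ = 1 := Complex.norm_eq_one_of_pow_eq_one h2 hN.ne'
  have hξ0 : ξ ≠ 0 := by intro h; simp [h] at hξ
  set u := ζ / ξ with hu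
  have huN : u ^ N = 1 := by rw [hu, div_pow, h1, h2, div_one]
  have hun : ‖u‖ = 1 := Complex.norm_eq_one_of_pow_eq_one huN hN.ne'
  have hu1 : u ≠ 1 := by
    intro h; apply hne; rw [hu, div_eq_one_iff_eq hξ0] at h; exact h
  have hd : ‖ζ - ξ‖ = ‖u - 1‖ := by
    have : ζ - ξ = ξ * (u - 1) := by rw [hu]; field_simp
    rw [this, norm_mul, hξ, one_mul]
  rw [hd]
  have hsum : ∑ i ∈ Finset.range N, u ^ i = 0 := by
    rw [geom_sum_eq hu1, huN]; simp
  have hpow : ∀ i : ℕ, ‖1 - u ^ i‖ ≤ i * ‖u - 1‖ := by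
    intro i
    induction i with
    | zero => simp
    | succ i ih =>
      have : 1 - u ^ (i+1) = (1 - u ^ i) + u ^ i * (1 - u) := by ring
      rw [this]
      refine (norm_add_le _ _).trans ?_
      rw [norm_mul, norm_pow, hun, one_pow, one_mul, norm_sub_rev 1 u]
      push_cast
      linarith
  have hle : (N:ℝ) ≤ ∑ i ∈ Finset.range N, (i:ℝ) * ‖u - 1‖ := by
    have e : (N:ℂ) = ∑ i ∈ Finset.range N, (1 - u ^ i) := by
      rw [Finset.sum_sub_distrib, hsum]; simp
    calc (N:ℝ) = ‖(N:ℂ)‖ := by simp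
      _ = ‖∑ i ∈ Finset.range N, (1 - u ^ i)‖ := by rw [← e]
      _ ≤ _ := norm_sum_le_of_le _ (fun i _ => hpow i)
  rw [← Finset.sum_mul] at hle
  have hg : (∑ i ∈ Finset.range N, (i:ℝ)) * 2 = N * (N - 1) := by
    have := Finset.sum_range_id_mul_two N
    have h3 : (((∑ i ∈ Finset.range N, i) * 2 : ℕ) : ℝ) = ((N * (N - 1) : ℕ) : ℝ) := by rw [this]
    push_cast [Nat.cast_sub hN] at h3
    simpa using h3
  rw [div_le_iff₀ hN']
  have h4 : (N:ℝ) * 2 ≤ N * (N - 1) * ‖u - 1‖ := by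
    rw [← hg]; linarith
  have h5 : (2:ℝ) ≤ (N - 1) * ‖u - 1‖ := by
    apply le_of_mul_le_mul_left _ hN'
    linarith
  nlinarith [norm_nonneg (u - 1)]

section seq
variable (g : ℕ → ℂ) (x : ℝ) (σ M θ : ℕ → ℝ)

lemma aux_small (hσ : Monotone σ) (hθ : ∀ k, θ k ≤ 1/2)
    (h3 : ∀ k, σ (k+1) ≤ x → ‖g k‖ ≤ θ k) (n : ℕ) (hn : σ n ≤ x) :
    ‖∏ k ∈ Finset.range n, g k‖ ≤ (1/2) ^ n := by
  rw [norm_prod]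
  calc _ ≤ ∏ k ∈ Finset.range n, (1/2:ℝ) := by
        apply Finset.prod_le_prod
        · intros; positivity
        · intro k hk
          exact (h3 k ((hσ (Finset.mem_range.1 hk)).trans hn)).trans (hθ k)
    _ = _ := by simp

lemma aux_step (hσ : Monotone σ) (hθ : ∀ k, θ k ≤ 1/2) (hM : ∀ k, 1 ≤ M k)
    (hθM : ∀ k, θ k * M (k+1) ≤ 1/2)
    (h2 : ∀ k, ‖g k‖ ≤ M k)
    (h3 : ∀ k, σ (k+1) ≤ x → ‖g k‖ ≤ θ k) (n : ℕ) (hn : σ n ≤ x) :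
    ‖∏ k ∈ Finset.range (n+1), g k‖ ≤ M 0 * (1/2) ^ n := by
  cases n with
  | zero => simpa using h2 0
  | succ m =>
    have hm := aux_small g x σ θ hσ hθ h3 m ((hσ (Nat.le_succ m)).trans hn)
    rw [Finset.prod_range_succ, Finset.prod_range_succ, mul_assoc, norm_mul, norm_mul]
    have : ‖g m‖ * ‖g (m+1)‖ ≤ 1/2 := by
      have a1 := h3 m hn
      have a2 := h2 (m+1)
      have a3 := hM (m+1)
      calc _ ≤ θ m * M (m+1) := by
            apply mul_le_mul a1 a2 (norm_nonneg _) ((norm_nonneg _).trans a1)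
        _ ≤ _ := hθM m
    calc _ ≤ (1/2:ℝ) ^ m * (1/2) := by gcongr
      _ = 1 * (1/2) ^ (m+1) := by ring
      _ ≤ _ := by gcongr; exact hM 0

lemma aux_bdd (hσ : Monotone σ) (hθ : ∀ k, θ k ≤ 1/2) (hM : ∀ k, 1 ≤ M k)
    (hθM : ∀ k, θ k * M (k+1) ≤ 1/2)
    (h1 : ∀ k, x ≤ σ k → ‖g k - 1‖ ≤ (1/4) * (1/2) ^ k)
    (h2 : ∀ k, ‖g k‖ ≤ M k)
    (h3 : ∀ k, σ (k+1) ≤ x → ‖g k‖ ≤ θ k) (n : ℕ) :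
    ‖∏ k ∈ Finset.range n, g k‖ ≤ M 0 * (2 - (1/2) ^ n) := by
  have hM0 := hM 0
  induction n with
  | zero => simp; linarith
  | succ n ih =>
    have hu : (1/2:ℝ) ^ n ≤ 1 := pow_le_one₀ (by norm_num) (by norm_num)
    have hu0 : (0:ℝ) < (1/2:ℝ) ^ n := by positivity
    rcases le_total (σ n) x with h | h
    · refine (aux_step g x σ M θ hσ hθ hM hθM h2 h3 n h).trans ?_
      gcongr
      rw [pow_succ]; linarith
    · have a1 : ‖g n‖ ≤ 1 + (1/4) * (1/2) ^ n := by
        have := norm_add_le (g n - 1) 1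
        simp only [sub_add_cancel, norm_one] at this
        linarith [h1 n h]
      rw [Finset.prod_range_succ, norm_mul]
      calc _ ≤ (M 0 * (2 - (1/2) ^ n)) * (1 + (1/4) * (1/2) ^ n) := by
            apply mul_le_mul ih a1 (norm_nonneg _) ((norm_nonneg _).trans ih)
        _ = M 0 * ((2 - (1/2) ^ n) * (1 + (1/4) * (1/2) ^ n)) := by ring
        _ ≤ _ := by
          gcongr
          rw [pow_succ]
          nlinarith

lemma aux_diff (hσ : Monotone σ) (hθ : ∀ k, θ k ≤ 1/2) (hM : ∀ k, 1 ≤ M k)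
    (hθM : ∀ k, θ k * M (k+1) ≤ 1/2)
    (h1 : ∀ k, x ≤ σ k → ‖g k - 1‖ ≤ (1/4) * (1/2) ^ k)
    (h2 : ∀ k, ‖g k‖ ≤ M k)
    (h3 : ∀ k, σ (k+1) ≤ x → ‖g k‖ ≤ θ k) (n : ℕ) :
    dist (∏ k ∈ Finset.range n, g k) (∏ k ∈ Finset.range (n+1), g k) ≤ (2 * M 0) * (1/2) ^ n := by
  have hM0 := hM 0
  have hu0 : (0:ℝ) < (1/2:ℝ) ^ n := by positivity
  rw [dist_eq_norm]
  rcases le_total (σ n) x with h | h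
  · have b1 := aux_step g x σ M θ hσ hθ hM hθM h2 h3 n h
    have b2 := aux_small g x σ θ hσ hθ h3 n h
    refine (norm_sub_le _ _).trans ?_
    nlinarith
  · have b := aux_bdd g x σ M θ hσ hθ hM hθM h1 h2 h3 n
    have e : (∏ k ∈ Finset.range n, g k) - (∏ k ∈ Finset.range (n+1), g k)
      = (∏ k ∈ Finset.range n, g k) * (1 - g n) := by
      rw [Finset.prod_range_succ]; ring
    rw [e, norm_mul, norm_sub_rev]
    calc _ ≤ (M 0 * 2) * ((1/4) * (1/2) ^ n) := by
          gcongr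
          · refine b.trans ?_
            gcongr; linarith
          · exact h1 n h
      _ ≤ _ := by nlinarith

lemma aux_lower (hσ : Monotone σ)
    (h1 : ∀ k, x ≤ σ k → ‖g k - 1‖ ≤ (1/4) * (1/2) ^ k)
    (K : ℕ) (hK : x ≤ σ K) (n : ℕ) (hn : K ≤ n) :
    ‖∏ k ∈ Finset.range K, g k‖ * (1/2 + (1/2) ^ n / 2) ≤ ‖∏ k ∈ Finset.range n, g k‖ := by
  induction n, hn using Nat.le_induction with
  | base =>
    have hu : (1/2:ℝ) ^ K ≤ 1 := pow_le_one₀ (by norm_num) (by norm_num)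
    nlinarith [norm_nonneg (∏ k ∈ Finset.range K, g k)]
  | succ n hn ih =>
    have hu : (1/2:ℝ) ^ n ≤ 1 := pow_le_one₀ (by norm_num) (by norm_num)
    have hu0 : (0:ℝ) < (1/2:ℝ) ^ n := by positivity
    have a1 : 1 - (1/4) * (1/2) ^ n ≤ ‖g n‖ := by
      have := norm_sub_le (g n) (g n - 1)
      simp only [sub_sub_cancel, norm_one] at this
      linarith [h1 n (hK.trans (hσ hn))]
    rw [Finset.prod_range_succ, norm_mul]
    calc _ ≤ ‖∏ k ∈ Finset.range K, g k‖ * ((1/2 + (1/2) ^ n / 2) * (1 - (1/4) * (1/2) ^ n)) := by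
          gcongr
          rw [pow_succ]
          nlinarith
      _ = (‖∏ k ∈ Finset.range K, g k‖ * (1/2 + (1/2) ^ n / 2)) * (1 - (1/4) * (1/2) ^ n) := by ring
      _ ≤ _ := by
        gcongr
        linarith
end seq

/-- choice of the exponent -/
lemma aux_N (t T η θ b : ℝ) (ht0 : 0 ≤ t) (ht : t < 1) (hT : 1 < T) (hη : 0 < η) (hθ : 0 < θ)
    (C : ℝ) (hb : 0 < b) :
    ∃ N : ℕ, 0 < N ∧ C / N < b ∧
      (∀ w : ℂ, ‖w‖ ≤ t → ‖(1 - w ^ N)⁻¹ - 1‖ ≤ η) ∧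
      (∀ w : ℂ, T ≤ ‖w‖ → ‖(1 - w ^ N)⁻¹‖ ≤ θ) := by
  have e1 : ∀ᶠ N : ℕ in Filter.atTop, t ^ N < min (1/2) (η/2) :=
    (tendsto_pow_atTop_nhds_zero_of_lt_one ht0 ht).eventually_lt_const (by positivity)
  have e2 : ∀ᶠ N : ℕ in Filter.atTop, 1 + θ⁻¹ ≤ T ^ N :=
    (tendsto_pow_atTop_atTop_of_one_lt hT).eventually_ge_atTop _
  have e3 : ∀ᶠ N : ℕ in Filter.atTop, C / N < b :=
    (tendsto_const_div_atTop_nhds_zero_nat C).eventually_lt_const hb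
  obtain ⟨N, ⟨⟨h1, h2⟩, h3⟩, h4⟩ := (((e1.and e2).and e3).and (Filter.eventually_gt_atTop 0)).exists
  refine ⟨N, h4, h3, ?_, ?_⟩
  · intro w hw
    have a : ‖w ^ N‖ ≤ t ^ N := by rw [norm_pow]; gcongr
    have a1 : ‖w ^ N‖ ≤ 1/2 := a.trans (h1.le.trans (min_le_left _ _))
    have a2 : ‖w ^ N‖ ≤ η/2 := a.trans (h1.le.trans (min_le_right _ _))
    have a3 : 1/2 ≤ ‖1 - w ^ N‖ := by
      have := norm_sub_norm_le 1 (w ^ N)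
      rw [norm_one] at this; linarith
    have hne : 1 - w ^ N ≠ 0 := by
      intro h; rw [h] at a3; norm_num at a3
    have e : (1 - w ^ N)⁻¹ - 1 = w ^ N / (1 - w ^ N) := by field_simp; ring
    rw [e, norm_div, div_le_iff₀ (by linarith)]
    nlinarith
  · intro w hw
    have a : T ^ N ≤ ‖w ^ N‖ := by rw [norm_pow]; gcongr
    have a3 : θ⁻¹ ≤ ‖1 - w ^ N‖ := by
      have := norm_sub_norm_le (w ^ N) 1
      rw [norm_one, norm_sub_rev] at this; linarith
    rw [norm_inv]
    exact inv_le_of_inv_le₀ hθ a3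

theorem stmt_7 (ε : ℝ) (hε : 0 < ε) (a : ℂ) (r : ℝ) (hr : 0 < r) :
    ∃ (ctr : ℕ → ℂ) (rad : ℕ → ℝ) (p q : ℕ → Polynomial ℂ) (f : ℂ → ℂ) (U : Set ℂ),
      U = (⋃ k, ball (ctr k) (rad k)) ∧
      (∀ n, 0 < rad n) ∧
      Summable rad ∧ (∑' n, rad n) < ε ∧
      (∀ n : ℕ, ∀ z ∈ Uᶜ, (q n).eval z ≠ 0) ∧
      TendstoUniformlyOn (fun n z => (p n).eval z / (q n).eval z) f Filter.atTop Uᶜ ∧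
      (∀ z ∈ (ball a r)ᶜ \ U, f z = 0) ∧
      (∀ z ∈ ball a r \ U, f z ≠ 0) ∧
      U ⊆ {z : ℂ | r - ε < dist z a ∧ dist z a < r} ∧
      (∀ m n : ℕ, m ≠ n → ball (ctr m) (rad m) ∩ ball (ctr n) (rad n) = ∅) := by
  obtain ⟨c, hc0, hcε, hcr⟩ : ∃ c : ℝ, 0 < c ∧ 2 * c ≤ ε ∧ 2 * c ≤ r :=
    ⟨min ε r / 2, by positivity, by linarith [min_le_left ε r], by linarith [min_le_right ε r]⟩
  obtain ⟨s0, hs00, hs0q, hs0ε⟩ : ∃ s0 : ℝ, 0 < s0 ∧ s0 ≤ 1/4 ∧ 8 * r * s0 < ε := by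
    refine ⟨min (1/4) (ε / (16 * r)), by positivity, min_le_left _ _, ?_⟩
    have : 8 * r * min (1/4) (ε / (16 * r)) ≤ 8 * r * (ε / (16 * r)) := by
      gcongr; exact min_le_right _ _
    have e : 8 * r * (ε / (16 * r)) = ε / 2 := by field_simp; norm_num
    linarith
  have hpow0 : ∀ k : ℕ, (0:ℝ) < (1/2) ^ k := fun k => by positivity
  have hpow1 : ∀ k : ℕ, (1/2:ℝ) ^ k ≤ 1 := fun k => pow_le_one₀ (by norm_num) (by norm_num)
  obtain ⟨ρ, hρ⟩ : ∃ ρ : ℕ → ℝ, ∀ k, ρ k = r - c * (1/2) ^ k := ⟨_, fun _ => rfl⟩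
  obtain ⟨σ, hσd⟩ : ∃ σ : ℕ → ℝ, ∀ k, σ k = r - c * (1/2) ^ k * (3/2) := ⟨_, fun _ => rfl⟩
  obtain ⟨s, hsd⟩ : ∃ s : ℕ → ℝ, ∀ k, s k = s0 * (1/2) ^ k := ⟨_, fun _ => rfl⟩
  have hcp : ∀ k, 0 < c * (1/2:ℝ) ^ k := fun k => by positivity
  have hcp1 : ∀ k, c * (1/2:ℝ) ^ k ≤ c := fun k => by nlinarith [hpow1 k]
  have hσ0 : ∀ k, 0 < σ k := fun k => by rw [hσd]; linarith [hcp1 k]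
  have hσε : ∀ k, r - ε < σ k := fun k => by rw [hσd]; linarith [hcp1 k]
  have hσr : ∀ k, σ k < r := fun k => by rw [hσd]; linarith [hcp k]
  have hσρ : ∀ k, σ k + c * (1/2) ^ k / 4 < ρ k := fun k => by rw [hσd, hρ]; linarith [hcp k]
  have hρσ : ∀ k, ρ k + c * (1/2) ^ k / 4 ≤ σ (k+1) := fun k => by
    rw [hσd, hρ, pow_succ]; linarith [hcp k]
  have hρ0 : ∀ k, 0 < ρ k := fun k => by linarith [hσρ k, hσ0 k, hcp k]
  have hρr : ∀ k, ρ k ≤ r := fun k => by rw [hρ]; linarith [hcp k]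
  have hσm : Monotone σ := monotone_nat_of_le_succ fun k => by
    linarith [hσρ k, hρσ k, hcp k]
  have hs0 : ∀ k, 0 < s k := fun k => by rw [hsd]; positivity
  have hs1 : ∀ k, s k ≤ 1/4 := fun k => by rw [hsd]; nlinarith [hpow1 k]
  have hNex : ∀ k : ℕ, ∃ N : ℕ, 0 < N ∧ (ρ k * (4 * s k)) / N < c * (1/2) ^ k / 4 ∧
      (∀ w : ℂ, ‖w‖ ≤ σ k / ρ k → ‖(1 - w ^ N)⁻¹ - 1‖ ≤ (1/4) * (1/2) ^ k) ∧
      (∀ w : ℂ, σ (k+1) / ρ k ≤ ‖w‖ → ‖(1 - w ^ N)⁻¹‖ ≤ s (k+1) / 2) := by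
    intro k
    apply aux_N
    · exact (div_pos (hσ0 k) (hρ0 k)).le
    · rw [div_lt_one (hρ0 k)]; linarith [hσρ k, hcp k]
    · rw [one_lt_div (hρ0 k)]; linarith [hρσ k, hcp k]
    · positivity
    · linarith [hs0 (k+1)]
    · linarith [hcp k]
  choose N hN0 hNb hN1 hN2 using hNex
  have hNp : ∀ k, (0:ℝ) < N k := fun k => by exact_mod_cast hN0 k
  let I := Σ k : ℕ, Fin (N k)
  let ζ : ℕ → ℂ := fun k => Complex.exp (2 * Real.pi * Complex.I / (N k))
  have hζ : ∀ k, IsPrimitiveRoot (ζ k) (N k) := fun k =>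
    Complex.isPrimitiveRoot_exp (N k) (hN0 k).ne'
  let R : ℕ → ℝ := fun k => (ρ k * (4 * s k)) / N k
  have hR0 : ∀ k, 0 < R k := fun k => div_pos (mul_pos (hρ0 k) (by linarith [hs0 k])) (hNp k)
  let C : I → ℂ := fun i => a + ρ i.1 * ζ i.1 ^ (i.2 : ℕ)
  let rd : I → ℝ := fun i => R i.1
  have hinf : Infinite I := by
    refine Infinite.of_injective (fun k : ℕ => (⟨k, ⟨0, hN0 k⟩⟩ : I)) ?_
    intro k l h
    exact congrArg Sigma.fst h
  obtain ⟨hden⟩ := nonempty_denumerable I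
  let e : ℕ ≃ I := (Denumerable.eqv I).symm
  have hζn : ∀ k (i : ℕ), ‖ζ k ^ i‖ = 1 := fun k i => by
    rw [norm_pow, Complex.norm_eq_one_of_pow_eq_one (hζ k).pow_eq_one (hN0 k).ne', one_pow]
  have hCd : ∀ i, dist (C i) a = ρ i.1 := fun i => by
    simp only [C, dist_eq_norm, add_sub_cancel_left, norm_mul, hζn, mul_one]
    simp [abs_of_pos (hρ0 i.1)]
  have hann : ∀ i, ∀ z ∈ ball (C i) (rd i), σ i.1 < dist z a ∧ dist z a < σ (i.1 + 1) := by
    intro i z hz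
    rw [mem_ball] at hz
    have hlt : rd i < c * (1/2) ^ i.1 / 4 := hNb i.1
    have t1 := dist_triangle z (C i) a
    have t2 := dist_triangle (C i) z a
    rw [hCd i] at t1 t2
    rw [dist_comm (C i) z] at t2
    constructor
    · linarith [hσρ i.1]
    · linarith [hρσ i.1]
  have hdisj : ∀ i j : I, i ≠ j → ball (C i) (rd i) ∩ ball (C j) (rd j) = ∅ := by
    rintro ⟨k, i⟩ ⟨l, j⟩ hne
    rw [Set.eq_empty_iff_forall_notMem]
    rintro z ⟨hz1, hz2⟩
    have a1 := hann _ z hz1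
    have a2 := hann _ z hz2
    simp only at a1 a2
    have hkl : k = l := by
      rcases lt_trichotomy k l with h | h | h
      · have := hσm (Nat.succ_le_of_lt h)
        simp only [Nat.succ_eq_add_one] at this
        linarith
      · exact h
      · have := hσm (Nat.succ_le_of_lt h)
        simp only [Nat.succ_eq_add_one] at this
        linarith
    subst hkl
    have hij : ζ k ^ (i:ℕ) ≠ ζ k ^ (j:ℕ) := by
      intro h
      apply hne
      have := (hζ k).pow_inj i.2 j.2 h
      rw [Fin.ext this]
    have hsep := aux_sep (N k) (hN0 k) _ _
      (by rw [← pow_mul, mul_comm, pow_mul, (hζ k).pow_eq_one, one_pow])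
      (by rw [← pow_mul, mul_comm, pow_mul, (hζ k).pow_eq_one, one_pow]) hij
    have hd : dist (C ⟨k, i⟩) (C ⟨k, j⟩) = ρ k * ‖ζ k ^ (i:ℕ) - ζ k ^ (j:ℕ)‖ := by
      have e : C ⟨k, i⟩ - C ⟨k, j⟩ = ρ k * (ζ k ^ (i:ℕ) - ζ k ^ (j:ℕ)) := by
        simp only [C]; ring
      rw [dist_eq_norm, e, norm_mul, Complex.norm_real, Real.norm_of_nonneg (hρ0 k).le]
    rw [mem_ball] at hz1 hz2
    have t := dist_triangle_left (C ⟨k, i⟩) (C ⟨k, j⟩) z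
    rw [hd] at t
    have h1 : ρ k * (2 / N k) ≤ ρ k * ‖ζ k ^ (i:ℕ) - ζ k ^ (j:ℕ)‖ :=
      mul_le_mul_of_nonneg_left hsep (hρ0 k).le
    have h2 : R k ≤ ρ k * (1 / N k) := by
      have : R k = ρ k * ((4 * s k) / N k) := by simp only [R]; ring
      rw [this]
      have := hρ0 k
      have := hNp k
      gcongr
      linarith [hs1 k]
    have h3 : ρ k * (2 / N k) = 2 * (ρ k * (1 / N k)) := by ring
    simp only [rd] at hz1 hz2
    linarith
  have hfib : ∀ k, ∑' i : Fin (N k), rd ⟨k, i⟩ = ρ k * (4 * s k) := by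
    intro k
    have := (hNp k).ne'
    simp only [rd, R, tsum_fintype, Finset.sum_const, Finset.card_univ, Fintype.card_fin, nsmul_eq_mul]
    field_simp
  have hle : ∀ k, ρ k * (4 * s k) ≤ 4 * r * s0 * (1/2) ^ k := by
    intro k
    calc _ ≤ r * (4 * s k) := by
          have := hs0 k
          gcongr
          exact hρr k
      _ = _ := by rw [hsd]; ring
  have hnn : ∀ k, 0 ≤ ρ k * (4 * s k) := fun k => mul_nonneg (hρ0 k).le (by linarith [hs0 k])
  have hgeo : HasSum (fun k : ℕ => 4 * r * s0 * (1/2:ℝ) ^ k) (4 * r * s0 * 2) :=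
    hasSum_geometric_two.mul_left _
  have hsumk : Summable (fun k => ρ k * (4 * s k)) := Summable.of_nonneg_of_le hnn hle hgeo.summable
  have hsumI : Summable rd := by
    rw [summable_sigma_of_nonneg (fun i => (hR0 i.1).le)]
    refine ⟨fun k => (hasSum_fintype _).summable, ?_⟩
    exact hsumk.congr fun k => (hfib k).symm
  have htsum : ∑' i, rd i < ε := by
    have e1 : ∑' i, rd i = ∑' k, ρ k * (4 * s k) := by
      rw [hsumI.tsum_sigma' (fun k => (hasSum_fintype _).summable)]
      simp only [hfib]
    rw [e1]
    have := hsumk.tsum_le_tsum hle hgeo.summable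
    rw [hgeo.tsum_eq] at this
    linarith
  let U : Set ℂ := ⋃ k, ball (C (e k)) (rd (e k))
  have hU : ∀ z ∈ Uᶜ, ∀ i, rd i ≤ dist z (C i) := by
    intro z hz i
    by_contra h
    push Not at h
    apply hz
    refine mem_iUnion.2 ⟨e.symm i, ?_⟩
    rw [Equiv.apply_symm_apply]
    exact h
  let h : ℕ → ℂ → ℂ := fun k z => 1 - ((z - a) / ρ k) ^ N k
  have hlow : ∀ z ∈ Uᶜ, ∀ k, s k ≤ ‖h k z‖ := by
    intro z hz k
    by_contra hlt
    push Not at hlt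
    obtain ⟨ξ, hξ1, hξ2⟩ := aux_root _ (N k) (hN0 k) (s k) (hs0 k) (hs1 k) hlt
    haveI : NeZero (N k) := ⟨(hN0 k).ne'⟩
    obtain ⟨i, hi, rfl⟩ := (hζ k).eq_pow_of_pow_eq_one hξ1
    have := hU z hz ⟨k, ⟨i, hi⟩⟩
    have hρc : (ρ k : ℂ) ≠ 0 := by exact_mod_cast (hρ0 k).ne'
    have ee : z - C ⟨k, ⟨i, hi⟩⟩ = ρ k * ((z - a) / ρ k - ζ k ^ i) := by
      simp only [C]; field_simp; ring
    rw [dist_eq_norm, ee, norm_mul, Complex.norm_real, Real.norm_of_nonneg (hρ0 k).le] at this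
    have h2 : ρ k * ‖(z - a) / ρ k - ζ k ^ i‖ < ρ k * (4 * s k / N k) :=
      mul_lt_mul_of_pos_left hξ2 (hρ0 k)
    have h3 : rd ⟨k, ⟨i, hi⟩⟩ = ρ k * (4 * s k / N k) := by simp only [rd, R]; ring
    linarith
  have hne : ∀ z ∈ Uᶜ, ∀ k, h k z ≠ 0 := by
    intro z hz k h0
    have := hlow z hz k
    rw [h0, norm_zero] at this
    linarith [hs0 k]
  have hwn : ∀ z k, ‖(z - a) / (ρ k : ℂ)‖ = dist z a / ρ k := by
    intro z k
    rw [norm_div, Complex.norm_real, Real.norm_of_nonneg (hρ0 k).le, dist_eq_norm]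
  have H1 : ∀ z k, dist z a ≤ σ k → ‖(h k z)⁻¹ - 1‖ ≤ (1/4) * (1/2) ^ k := by
    intro z k hz
    apply hN1 k
    rw [hwn]
    exact div_le_div_of_nonneg_right hz (hρ0 k).le
  have H3 : ∀ z k, σ (k+1) ≤ dist z a → ‖(h k z)⁻¹‖ ≤ s (k+1) / 2 := by
    intro z k hz
    apply hN2 k
    rw [hwn]
    exact div_le_div_of_nonneg_right hz (hρ0 k).le
  have H2 : ∀ z ∈ Uᶜ, ∀ k, ‖(h k z)⁻¹‖ ≤ (s k)⁻¹ := by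
    intro z hz k
    rw [norm_inv]
    exact inv_anti₀ (hs0 k) (hlow z hz k)
  have hθ : ∀ k, s (k+1) / 2 ≤ 1/2 := fun k => by linarith [hs1 (k+1)]
  have hM : ∀ k, 1 ≤ (s k)⁻¹ := fun k => (one_le_inv₀ (hs0 k)).2 (by linarith [hs1 k])
  have hθM : ∀ k, s (k+1) / 2 * (s (k+1))⁻¹ ≤ 1/2 := fun k => by
    have := (hs0 (k+1)).ne'
    apply le_of_eq; field_simp
  let P : ℕ → ℂ → ℂ := fun n z => ∏ k ∈ Finset.range n, (h k z)⁻¹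
  have hdiff : ∀ z ∈ Uᶜ, ∀ n, dist (P n z) (P (n+1) z) ≤ (2 * (s 0)⁻¹) * (1/2) ^ n := by
    intro z hz n
    exact aux_diff (fun k => (h k z)⁻¹) (dist z a) σ (fun k => (s k)⁻¹) (fun k => s (k+1) / 2)
      hσm hθ hM hθM (H1 z) (H2 z hz) (H3 z) n
  have hlim : ∀ z, ∃ l, z ∈ Uᶜ → Filter.Tendsto (fun n => P n z) Filter.atTop (nhds l) := by
    intro z
    by_cases hz : z ∈ Uᶜ
    · obtain ⟨l, hl⟩ := cauchySeq_tendsto_of_complete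
        (cauchySeq_of_le_geometric (1/2) _ (by norm_num) (hdiff z hz))
      exact ⟨l, fun _ => hl⟩
    · exact ⟨0, fun h => absurd h hz⟩
  choose f hf using hlim
  let q : ℕ → Polynomial ℂ := fun n => ∏ k ∈ Finset.range n,
    (1 - (Polynomial.C ((ρ k : ℂ)⁻¹) * (Polynomial.X - Polynomial.C a)) ^ N k)
  have hq : ∀ n z, (q n).eval z = ∏ k ∈ Finset.range n, h k z := by
    intro n z
    simp only [q, h, Polynomial.eval_prod]
    refine Finset.prod_congr rfl fun k _ => ?_
    simp [div_eq_inv_mul]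
  refine ⟨fun n => C (e n), fun n => rd (e n), fun _ => 1, q, f, U, rfl, fun n => hR0 _,
    (e.summable_iff (f := rd)).2 hsumI, ?_, ?_, ?_, ?_, ?_, ?_, ?_⟩
  · rw [e.tsum_eq rd]; exact htsum
  · intro n z hz
    rw [hq]
    exact Finset.prod_ne_zero_iff.2 fun k _ => hne z hz k
  · rw [Metric.tendstoUniformlyOn_iff]
    intro δ hδ
    have ht : Filter.Tendsto (fun n : ℕ => (2 * (s 0)⁻¹) * (1/2:ℝ) ^ n / (1 - 1/2)) Filter.atTop
        (nhds 0) := by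
      have := ((tendsto_pow_atTop_nhds_zero_of_lt_one (r := (1/2:ℝ)) (by norm_num)
        (by norm_num)).const_mul (2 * (s 0)⁻¹)).div_const (1 - 1/2)
      simpa using this
    filter_upwards [ht.eventually_lt_const hδ] with n hn z hz
    have := dist_le_of_le_geometric_of_tendsto (1/2) _ (by norm_num) (hdiff z hz) (hf z hz) n
    have hP : (Polynomial.eval z 1 : ℂ) / (q n).eval z = P n z := by
      rw [hq]; simp [P]
    rw [hP, dist_comm]
    exact this.trans_lt hn
  · rintro z ⟨hz1, hz⟩
    have hzr : r ≤ dist z a := by simpa [mem_ball] using hz1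
    refine tendsto_nhds_unique (hf z hz) ?_
    refine squeeze_zero_norm (a := fun n : ℕ => (1/2:ℝ) ^ n) ?_
      (tendsto_pow_atTop_nhds_zero_of_lt_one (by norm_num) (by norm_num))
    intro n
    exact aux_small (fun k => (h k z)⁻¹) (dist z a) σ (fun k => s (k+1) / 2) hσm hθ (H3 z) n
      ((hσr n).le.trans hzr)
  · rintro z ⟨hz1, hz⟩
    rw [mem_ball] at hz1
    have hσt : Filter.Tendsto σ Filter.atTop (nhds r) := by
      have := (((tendsto_pow_atTop_nhds_zero_of_lt_one (r := (1/2:ℝ)) (by norm_num)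
        (by norm_num)).const_mul c).mul_const (3/2)).const_sub r
      have e : σ = fun k => r - c * (1/2) ^ k * (3/2) := funext hσd
      rw [e]; simpa using this
    obtain ⟨K, hK⟩ := (hσt.eventually_const_lt hz1).exists
    have hPK : 0 < ‖P K z‖ := norm_pos_iff.2
      (Finset.prod_ne_zero_iff.2 fun k _ => inv_ne_zero (hne z hz k))
    have hl : ‖P K z‖ * (1/2) ≤ ‖f z‖ := by
      refine ge_of_tendsto (hf z hz).norm ?_
      filter_upwards [Filter.eventually_ge_atTop K] with n hn
      refine le_trans ?_ (aux_lower (fun k => (h k z)⁻¹) (dist z a) σ hσm (H1 z) K hK.le n hn)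
      have := hpow0 n
      apply mul_le_mul_of_nonneg_left _ hPK.le
      linarith
    intro h0
    rw [h0, norm_zero] at hl
    linarith
  · intro z hz
    obtain ⟨k, hk⟩ := mem_iUnion.1 hz
    have := hann _ z hk
    exact ⟨(hσε _).trans this.1, this.2.trans (hσr _)⟩
  · intro m n hmn
    exact hdisj _ _ (fun h => hmn (e.injective h))
end

section
/- Let b ∈ ℂ, let s_0 > s_1 ≥ 0 and let ε > 0. Then there exists an abstract Swiss cheese A = ((a_n, r_n)) with a_0 = a_1 = b, r_0 = s_0, r_1 = s_1 and ρ_ann(A) = ∑_{n ≥ 2} r_n < ε, such that R(X_A) is regular. -/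
open Metric Set

open Metric Set

open Filter Topology in
lemma prod_conv (S : Set ℂ) (h : ℕ → ℂ → ℂ) (d : ℂ → ℝ) (ρ : ℝ) (r B s : ℕ → ℝ)
    (hrρ : ∀ n, r n < ρ) (hr : Tendsto r atTop (𝓝 ρ)) (hrm : Monotone r)
    (hB : ∀ n, 4 ≤ B n)
    (hs : ∀ n, s n = (1/2)^n / (2 * ∏ k ∈ Finset.range (n+3), B k))
    (ha : ∀ n, ∀ z ∈ S, r (n+2) ≤ d z → ‖h n z‖ ≤ s n)
    (hb : ∀ n, ∀ z ∈ S, d z ≤ r n → ‖h n z - 1‖ ≤ s n)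
    (hc : ∀ n, ∀ z ∈ S, ‖h n z‖ ≤ B n)
    (hd : ∀ n, ∀ z ∈ S, h n z ≠ 0) :
    ∃ F : ℂ → ℂ, TendstoUniformlyOn (fun n z => ∏ k ∈ Finset.range (n+2), h k z) F atTop S ∧
      (∀ z ∈ S, ρ ≤ d z → F z = 0) ∧ (∀ z ∈ S, d z < ρ → F z ≠ 0) := by
  set P : ℕ → ℝ := fun n => ∏ k ∈ Finset.range n, B k with hP
  have Psucc : ∀ n, P (n+1) = P n * B n := fun n => Finset.prod_range_succ _ _
  have P1 : ∀ n, 1 ≤ P n := fun n => by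
    induction n with
    | zero => simp [hP]
    | succ n ih => rw [Psucc]; nlinarith [hB n]
  have Pm : ∀ n, 4 * P n ≤ P (n+1) := fun n => by
    rw [Psucc]; nlinarith [hB n, P1 n]
  have hs' : ∀ n, s n * (2 * P (n+3)) = (1/2)^n := fun n => by
    rw [hs]; have := P1 (n+3); exact div_mul_cancel₀ _ (by positivity)
  have s0 : ∀ n, 0 < s n := fun n => by
    have := hs' n; have h2 := P1 (n+3)
    have h3 : (0:ℝ) < (1/2)^n := by positivity
    by_contra hcon
    nlinarith
  set f : ℕ → ℂ → ℂ := fun n z => ∏ k ∈ Finset.range n, h k z with hf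
  have fsucc : ∀ n z, f (n+1) z = f n z * h n z := fun n z => Finset.prod_range_succ _ _
  have fP : ∀ z ∈ S, ∀ n, ‖f n z‖ ≤ P n := fun z hz n => by
    simp only [hf, hP, norm_prod]
    exact Finset.prod_le_prod (fun _ _ => norm_nonneg _) (fun i _ => hc i z hz)
  have fsmall : ∀ z ∈ S, ∀ n, r (n+2) ≤ d z → ‖f (n+2) z‖ ≤ P (n+2) * s n := fun z hz n hn => by
    rw [fsucc, fsucc, norm_mul, norm_mul, Psucc, Psucc]
    have h1 := fP z hz n
    have h2 := ha n z hz hn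
    have h3 := hc (n+1) z hz
    have := P1 n
    have := hB n
    have := s0 n
    calc ‖f n z‖ * ‖h n z‖ * ‖h (n+1) z‖ ≤ P n * s n * B (n+1) := by gcongr
      _ ≤ P n * s n * B (n+1) * B n := by
        have := hB (n+1)
        exact le_mul_of_one_le_right (by positivity) (by linarith)
      _ = _ := by ring
  have diff : ∀ z ∈ S, ∀ n, ‖f (n+3) z - f (n+2) z‖ ≤ (1/2)^n := fun z hz n => by
    have e : f (n+3) z - f (n+2) z = f (n+2) z * (h (n+2) z - 1) := by rw [fsucc]; ring
    rw [e, norm_mul, ← hs' n]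
    have p2 := P1 (n+2)
    rcases le_total (d z) (r (n+2)) with hle | hle
    · have h1 := fP z hz (n+2)
      have h2 := hb (n+2) z hz hle
      have h4 : s (n+2) ≤ s n := by
        have e1 := hs' n
        have e2 := hs' (n+2)
        have q1 := Pm (n+3)
        have q2 := Pm (n+4)
        have q3 := P1 (n+3)
        have h3 : (0:ℝ) < (1/2)^n := by positivity
        have h5 : ((1:ℝ)/2)^(n+2) = (1/2)^n / 4 := by rw [pow_add]; ring
        rw [h5] at e2
        by_contra hcon
        push Not at hcon
        have : s n * (2 * P (n+3)) < s (n+2) * (2 * P (n+2+3)) := by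
          have := s0 n
          apply mul_lt_mul hcon _ (by linarith) (s0 _).le
          show 2 * P (n+3) ≤ 2 * P (n+5)
          linarith
        linarith
      have := s0 n
      calc _ ≤ P (n+2) * s n := by gcongr; linarith
        _ ≤ s n * (2 * P (n+3)) := by nlinarith [Pm (n+2)]
    · have h1 := fsmall z hz n hle
      have h2 : ‖h (n+2) z - 1‖ ≤ 2 * B (n+2) := by
        have := norm_sub_le (h (n+2) z) 1
        rw [norm_one] at this
        linarith [hc (n+2) z hz, hB (n+2)]
      have := s0 n
      calc _ ≤ (P (n+2) * s n) * (2 * B (n+2)) := by gcongr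
        _ = s n * (2 * P (n+3)) := by rw [Psucc (n+2)]; ring
  have sle : ∀ n, s n ≤ (1/2)^n / 8 := fun n => by
    rw [← hs' n]
    have := Pm (n+2); have := P1 (n+2)
    nlinarith [s0 n]
  have tail : ∀ z ∈ S, ∀ n m, n ≤ m → dist (f (n+2) z) (f (m+2) z) ≤ 2 * (1/2)^n := by
    intro z hz n m hnm
    have : ∀ k, dist (f (n+2) z) (f (n+k+2) z) ≤ 2 * (1/2)^n - 2 * (1/2)^(n+k) := by
      intro k
      induction k with
      | zero => simp
      | succ k ih =>
        have h1 := diff z hz (n+k)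
        have h2 := dist_triangle (f (n+2) z) (f (n+k+2) z) (f (n+k+3) z)
        rw [dist_comm (f (n+k+2) z), dist_eq_norm (f (n+k+3) z)] at h2
        have h5 : ((1:ℝ)/2)^(n+(k+1)) = (1/2)^(n+k) / 2 := by rw [← add_assoc, pow_succ]; ring
        rw [h5]
        show dist (f (n+2) z) (f (n+k+3) z) ≤ _
        linarith
    obtain ⟨k, rfl⟩ := Nat.exists_eq_add_of_le hnm
    have h3 : (0:ℝ) < (1/2)^(n+k) := by positivity
    linarith [this k]
  have lim0 : Tendsto (fun n : ℕ => 2 * ((1:ℝ)/2)^n) atTop (𝓝 0) := by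
    simpa using (tendsto_pow_atTop_nhds_zero_of_lt_one (by norm_num : (0:ℝ) ≤ 1/2) (by norm_num)).const_mul 2
  have ex : ∀ z, ∃ w, z ∈ S → Tendsto (fun n => f (n+2) z) atTop (𝓝 w) := by
    intro z
    by_cases hz : z ∈ S
    · have : CauchySeq (fun n => f (n+2) z) :=
        cauchySeq_of_le_tendsto_0' _ (fun n m hnm => tail z hz n m hnm) lim0
      obtain ⟨w, hw⟩ := cauchySeq_tendsto_of_complete this
      exact ⟨w, fun _ => hw⟩
    · exact ⟨0, fun h => absurd h hz⟩
  choose F hF using ex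
  refine ⟨F, ?_, ?_, ?_⟩
  · rw [Metric.tendstoUniformlyOn_iff]
    intro ε hε
    filter_upwards [lim0.eventually (gt_mem_nhds hε)] with n hn z hz
    refine lt_of_le_of_lt ?_ hn
    rw [dist_comm]
    refine le_of_tendsto (tendsto_const_nhds.dist (hF z hz)) ?_
    filter_upwards [eventually_ge_atTop n] with m hm
    exact tail z hz n m hm
  · intro z hz hρ
    refine tendsto_nhds_unique (hF z hz) ?_
    refine squeeze_zero_norm (fun n => ?_) lim0
    refine (fsmall z hz n ((hrρ _).le.trans hρ)).trans ?_
    have := hs' n; have := Pm (n+2); have := P1 (n+2)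
    have h3 : (0:ℝ) < (1/2)^n := by positivity
    nlinarith [s0 n]
  · intro z hz hρ h0
    obtain ⟨K, hK⟩ := (hr.eventually (lt_mem_nhds hρ)).exists
    have fne : ∀ n, f n z ≠ 0 := fun n => Finset.prod_ne_zero_iff.mpr (fun k _ => hd k z hz)
    have low : ∀ m, ‖f K z‖ * ((1 + (1/2)^m) / 2) ≤ ‖f (K+m) z‖ := by
      intro m
      induction m with
      | zero => simp
      | succ m ih =>
        have h1 : ‖h (K+m) z - 1‖ ≤ s (K+m) :=
          hb _ z hz (hK.le.trans (hrm (Nat.le_add_right _ _)))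
        have h2 : 1 - s (K+m) ≤ ‖h (K+m) z‖ := by
          have := norm_sub_norm_le (1:ℂ) (h (K+m) z)
          rw [norm_sub_rev, norm_one] at this
          linarith
        have h3 : s (K+m) ≤ (1/2)^m/8 := by
          refine (sle _).trans ?_
          have : ((1:ℝ)/2)^(K+m) ≤ (1/2)^m :=
            pow_le_pow_of_le_one (by norm_num) (by norm_num) (by omega)
          linarith
        have h4 : (0:ℝ) < (1/2)^m := by positivity
        have h5 : ((1:ℝ)/2)^m ≤ 1 := pow_le_one₀ (by norm_num) (by norm_num)
        rw [← add_assoc, fsucc, norm_mul, pow_succ]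
        set q := ((1:ℝ)/2)^m
        have h6 : 1 - q/8 ≤ ‖h (K+m) z‖ := by linarith
        have h7 := norm_nonneg (f K z)
        calc ‖f K z‖ * ((1 + q * (1/2)) / 2) ≤ ‖f K z‖ * ((1 + q)/2) * (1 - q/8) := by
              rw [mul_assoc]; gcongr; nlinarith
          _ ≤ _ := by gcongr; linarith
    have hl : Tendsto (fun n => ‖f (n+2) z‖) atTop (𝓝 0) := by
      have := (hF z hz).norm
      rwa [h0, norm_zero] at this
    have hpos : 0 < ‖f K z‖ / 2 := by have := norm_pos_iff.mpr (fne K); positivity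
    obtain ⟨n, hn1, hn2⟩ := ((hl.eventually (gt_mem_nhds hpos)).and (eventually_ge_atTop K)).exists
    obtain ⟨k, rfl⟩ := Nat.exists_eq_add_of_le hn2
    have := low (k+2)
    rw [← add_assoc] at this
    have h4 : (0:ℝ) < (1/2)^(k+2) := by positivity
    nlinarith [norm_nonneg (f K z)]

/-- lower bound away from roots of unity -/
lemma root_bound (u : ℂ) (N : ℕ) (hN : 1 ≤ N) (δ : ℝ) (hδ : N * δ ≤ 1)
    (h : ∀ ζ : ℂ, ζ ^ N = 1 → δ ≤ ‖u - ζ‖) : N * δ / 4 ≤ ‖1 - u ^ N‖ := by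
  by_contra hcon
  push Not at hcon
  set t := u^N - 1 with ht
  have e1 : ‖t‖ < N * δ / 4 := by rwa [norm_sub_rev] at hcon
  have e2 : ‖t‖ ≤ 1/2 := by linarith
  have hl := Complex.norm_log_one_add_half_le_self e2
  have hv : u^N = 1 + t := by rw [ht]; ring
  have hvne : (1:ℂ) + t ≠ 0 := by
    intro h0
    have : t = -1 := by linear_combination h0
    rw [this] at e2; norm_num at e2
  set L := Complex.log (1+t) / N with hL
  have hN0 : (N:ℂ) ≠ 0 := by exact_mod_cast (by omega : N ≠ 0)
  have hNr : (1:ℝ) ≤ N := by exact_mod_cast hN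
  have hexp : Complex.exp L ^ N = 1 + t := by
    rw [← Complex.exp_nat_mul, hL, mul_div_cancel₀ _ hN0, Complex.exp_log hvne]
  have hz := h (u / Complex.exp L) (by rw [div_pow, hexp, hv, div_self hvne])
  have hLn : ‖L‖ ≤ 3/2 * ‖t‖ / N := by
    rw [hL, norm_div, Complex.norm_natCast]; gcongr
  have hL1 : ‖L‖ ≤ 3/2 * ‖t‖ := hLn.trans (div_le_self (by positivity) hNr)
  -- u - ζ = ζ (exp L - 1)
  set ζ := u / Complex.exp L with hζ
  have hζN : ζ^N = 1 := by rw [div_pow, hexp, hv, div_self hvne]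
  have hζ1 : ‖ζ‖ = 1 := Complex.norm_eq_one_of_pow_eq_one hζN (by omega)
  have hu : u - ζ = ζ * (Complex.exp L - 1) := by
    rw [mul_sub, hζ, div_mul_cancel₀ _ (Complex.exp_ne_zero L), mul_one]
  have hb := Complex.norm_exp_sub_one_le (x := L) (by linarith)
  rw [hu, norm_mul, hζ1, one_mul] at hz
  have : δ ≤ 3 * ‖t‖ / N := by
    calc δ ≤ 2 * ‖L‖ := hz.trans hb
      _ ≤ 2 * (3/2 * ‖t‖ / N) := by gcongr
      _ = _ := by ring
  rw [le_div_iff₀ (by linarith)] at this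
  nlinarith [norm_nonneg t]

open Filter Topology in
lemma exists_N (r0 r1 r2 s : ℝ) (h0 : 0 < r0) (h1 : r0 < r1) (h2 : r1 < r2) (hs : 0 < s) :
    ∃ N : ℕ, 1 ≤ N ∧ (∀ w : ℂ, r2 ≤ ‖w‖ → ‖1 / (1 - (w / r1) ^ N)‖ ≤ s) ∧
      (∀ w : ℂ, ‖w‖ ≤ r0 → ‖1 / (1 - (w / r1) ^ N) - 1‖ ≤ s) := by
  have hr1 : 0 < r1 := h0.trans h1
  have hx : 1 < r2 / r1 := by rwa [lt_div_iff₀ hr1, one_mul]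
  have hy : r0 / r1 < 1 := by rwa [div_lt_iff₀ hr1, one_mul]
  have e1 := (tendsto_pow_atTop_atTop_of_one_lt hx).eventually (eventually_ge_atTop (1 + 1/s))
  have e2 := (tendsto_pow_atTop_nhds_zero_of_lt_one (by positivity) hy).eventually
    (gt_mem_nhds (show (0:ℝ) < min (1/2) (s/2) by positivity))
  obtain ⟨N, ⟨hN1, hN2⟩, hN3⟩ := ((e1.and e2).and (eventually_ge_atTop 1)).exists
  have hnorm : ∀ w : ℂ, ‖(w / r1)^N‖ = (‖w‖ / r1)^N := fun w => by
    rw [norm_pow, norm_div, Complex.norm_real, Real.norm_of_nonneg hr1.le]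
  refine ⟨N, hN3, fun w hw => ?_, fun w hw => ?_⟩
  · have h3 : 1 + 1/s ≤ ‖(w/r1)^N‖ := by
      rw [hnorm]; refine hN1.trans ?_; gcongr
    have h4 : 1/s ≤ ‖1 - (w/r1)^N‖ := by
      have := norm_sub_norm_le ((w/r1)^N) 1
      rw [norm_sub_rev, norm_one] at this
      linarith
    rw [norm_div, norm_one]
    have h5 : (0:ℝ) < 1/s := by positivity
    exact (one_div_le hs (h5.trans_le h4)).mp h4
  · have h3 : ‖(w/r1)^N‖ ≤ min (1/2) (s/2) := by
      rw [hnorm]; refine le_trans ?_ hN2.le; gcongr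
    have h5 := h3.trans (min_le_left _ _)
    have h6 := h3.trans (min_le_right _ _)
    have h4 : 1/2 ≤ ‖1 - (w/r1)^N‖ := by
      have := norm_sub_norm_le 1 ((w/r1)^N)
      rw [norm_one] at this
      linarith
    have hne : 1 - (w/r1)^N ≠ 0 := by
      intro h; rw [h, norm_zero] at h4; linarith
    have : 1 / (1 - (w / r1) ^ N) - 1 = (w/r1)^N / (1 - (w/r1)^N) := by
      rw [div_sub_one hne]; congr 1; ring
    rw [this, norm_div, div_le_iff₀ (by linarith)]
    nlinarith

open Filter Topology in
lemma core (c : ℂ) (ρ ε : ℝ) (hρ : 0 < ρ) (hε : 0 < ε) :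
    ∃ (a : ℕ × ℕ → ℂ) (R : ℕ × ℕ → ℝ), (∀ i, 0 ≤ R i) ∧
      ∑' i, ENNReal.ofReal (R i) ≤ ENNReal.ofReal ε ∧
      ∃ (q : ℕ → Polynomial ℂ) (F : ℂ → ℂ),
        (∀ n, ∀ z ∈ {z | ∀ i, z ∉ ball (a i) (R i)}, (q n).eval z ≠ 0) ∧
        TendstoUniformlyOn (fun n z => 1 / (q n).eval z) F atTop
          {z | ∀ i, z ∉ ball (a i) (R i)} ∧
        (∀ z ∈ {z | ∀ i, z ∉ ball (a i) (R i)}, ρ ≤ dist z c → F z = 0) ∧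
        (∀ z ∈ {z | ∀ i, z ∉ ball (a i) (R i)}, dist z c < ρ → F z ≠ 0) := by
  set η : ℝ := min 1 (ε / (2 * ρ)) with hη
  have hη0 : 0 < η := by positivity
  have hη1 : η ≤ 1 := min_le_left _ _
  have hη2 : 2 * ρ * η ≤ ε := by
    have : η ≤ ε / (2 * ρ) := min_le_right _ _
    rw [le_div_iff₀ (by positivity)] at this
    linarith
  set e : ℕ → ℝ := fun n => η * (1/2)^n with he
  have e0 : ∀ n, 0 < e n := fun n => by positivity
  have e1 : ∀ n, e n ≤ 1 := fun n => by
    have h5 : ((1:ℝ)/2)^n ≤ 1 := pow_le_one₀ (by norm_num) (by norm_num)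
    exact mul_le_one₀ hη1 (by positivity) h5
  set B : ℕ → ℝ := fun n => 4 / e n with hBdef
  have hB : ∀ n, 4 ≤ B n := fun n => by
    rw [hBdef]; simp only; rw [le_div_iff₀ (e0 n)]; linarith [e1 n]
  set s : ℕ → ℝ := fun n => (1/2)^n / (2 * ∏ k ∈ Finset.range (n+3), B k) with hsdef
  have s0 : ∀ n, 0 < s n := fun n => by
    have : 0 < ∏ k ∈ Finset.range (n+3), B k :=
      Finset.prod_pos (fun k _ => by linarith [hB k])
    positivity
  set r : ℕ → ℝ := fun n => ρ * (1 - 1 / ((n:ℝ) + 2)) with hr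
  have r0 : ∀ n, 0 < r n := fun n => by
    have : 1 / ((n:ℝ) + 2) < 1 := by
      rw [div_lt_one (by positivity)]; have : (0:ℝ) ≤ n := n.cast_nonneg
      linarith
    exact mul_pos hρ (by linarith)
  have rρ : ∀ n, r n < ρ := fun n => by
    have : 0 < 1 / ((n:ℝ) + 2) := by positivity
    simp only [hr]; nlinarith
  have rlt : ∀ n, r n < r (n+1) := fun n => by
    simp only [hr]
    have : 1 / (((n+1:ℕ):ℝ) + 2) < 1 / ((n:ℝ) + 2) := by
      apply one_div_lt_one_div_of_lt (by positivity); push_cast; linarith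
    gcongr
  have rlim : Tendsto r atTop (𝓝 ρ) := by
    have h1 : Tendsto (fun n : ℕ => 1 / ((n:ℝ) + 2)) atTop (𝓝 0) := by
      have := (tendsto_add_atTop_iff_nat 1).mpr (tendsto_one_div_add_atTop_nhds_zero_nat (𝕜 := ℝ))
      refine this.congr (fun n => ?_)
      push_cast; congr 1; ring
    have := (h1.const_sub 1).const_mul ρ
    rw [sub_zero, mul_one] at this
    exact this
  choose N hN1 hNa hNb using fun n => exists_N (r n) (r (n+1)) (r (n+2)) (s n)
    (r0 n) (rlt n) (rlt (n+1)) (s0 n)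
  have hN0 : ∀ n, (0:ℝ) < N n := fun n => by exact_mod_cast hN1 n
  set a : ℕ × ℕ → ℂ := fun i =>
    c + r (i.1+1) * Complex.exp (2 * Real.pi * Complex.I / N i.1) ^ i.2 with ha
  set R : ℕ × ℕ → ℝ := fun i => if i.2 < N i.1 then r (i.1+1) * (e i.1 / N i.1) else 0 with hR
  set S : Set ℂ := {z | ∀ i, z ∉ ball (a i) (R i)} with hS
  have low : ∀ n, ∀ z ∈ S, e n / 4 ≤ ‖1 - ((z - c) / r (n+1)) ^ N n‖ := by
    intro n z hz
    have := root_bound ((z - c) / r (n+1)) (N n) (hN1 n) (e n / N n)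
      (by rw [mul_div_cancel₀ _ (hN0 n).ne']; exact e1 n) ?_
    · rwa [mul_div_cancel₀ _ (hN0 n).ne'] at this
    · intro ζ hζ
      have hp := Complex.isPrimitiveRoot_exp (N n) (by have := hN1 n; omega)
      haveI : NeZero (N n) := ⟨by have := hN1 n; omega⟩
      obtain ⟨i, hi, rfl⟩ := hp.eq_pow_of_pow_eq_one hζ
      have hb := hz (n, i)
      simp only [ha, hR, if_pos hi, mem_ball, not_lt, dist_eq_norm] at hb
      have hrne : (r (n+1) : ℂ) ≠ 0 := by exact_mod_cast (r0 (n+1)).ne'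
      set ζ := Complex.exp (2 * Real.pi * Complex.I / N n) ^ i
      have e3 : z - (c + r (n+1) * ζ) = r (n+1) * ((z - c) / r (n+1) - ζ) := by
        rw [mul_sub, mul_div_cancel₀ _ hrne]; ring
      rw [e3, norm_mul, Complex.norm_real, Real.norm_of_nonneg (r0 _).le] at hb
      exact le_of_mul_le_mul_left hb (r0 _)
  have lne : ∀ n, ∀ z ∈ S, 1 - ((z - c) / r (n+1)) ^ N n ≠ 0 := by
    intro n z hz h
    have := low n z hz
    rw [h, norm_zero] at this
    linarith [e0 n]
  obtain ⟨F, hF1, hF2, hF3⟩ := prod_conv S (fun n z => 1 / (1 - ((z - c) / r (n+1)) ^ N n))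
    (fun z => dist z c) ρ r B s rρ rlim (monotone_nat_of_le_succ fun n => (rlt n).le) hB
    (fun n => rfl) (fun n z _ hd => hNa n (z - c) (by rwa [← dist_eq_norm]))
    (fun n z _ hd => hNb n (z - c) (by rwa [← dist_eq_norm]))
    (fun n z hz => by
      have := low n z hz
      have h0 := e0 n
      rw [norm_div, norm_one, hBdef]
      simp only
      rw [div_le_div_iff₀ (by linarith) h0]; linarith)
    (fun n z hz => one_div_ne_zero (lne n z hz))
  refine ⟨a, R, ?_, ?_, fun n => ∏ k ∈ Finset.range (n+2),
    (1 - (Polynomial.C ((r (k+1) : ℂ)⁻¹) * (Polynomial.X - Polynomial.C c)) ^ N k), F,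
    ?_, ?_, hF2, hF3⟩
  · intro i
    simp only [hR]
    split_ifs
    · have := r0 (i.1+1); have := e0 i.1; positivity
    · exact le_rfl
  · have hrow : ∀ k, ∑' i, ENNReal.ofReal (R (k, i)) ≤ ENNReal.ofReal (ρ * η * (1/2)^k) := by
      intro k
      rw [tsum_eq_sum (s := Finset.range (N k))
        (fun i hi => by simp only [Finset.mem_range] at hi; simp [hR, hi])]
      rw [← ENNReal.ofReal_sum_of_nonneg (fun i hi => by
        simp only [hR]
        split_ifs
        · have := r0 (k+1); have := e0 k; positivity
        · exact le_rfl)]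
      apply ENNReal.ofReal_le_ofReal
      rw [Finset.sum_congr rfl (fun i hi => by
        simp only [hR]; rw [if_pos (Finset.mem_range.mp hi)]), Finset.sum_const,
        Finset.card_range, nsmul_eq_mul]
      have : (N k : ℝ) * (r (k+1) * (e k / N k)) = r (k+1) * e k := by
        have := (hN0 k).ne'; field_simp
      rw [this, mul_assoc ρ η]
      have := e0 k
      exact mul_le_mul_of_nonneg_right (rρ _).le this.le
    rw [ENNReal.tsum_prod']
    refine (ENNReal.tsum_le_tsum hrow).trans ?_
    have hsum : Summable (fun k : ℕ => ρ * η * (1/2:ℝ)^k) := summable_geometric_two.mul_left _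
    rw [← ENNReal.ofReal_tsum_of_nonneg (fun k => by positivity) hsum, tsum_mul_left,
      tsum_geometric_two]
    apply ENNReal.ofReal_le_ofReal
    linarith
  · intro n z hz
    rw [Polynomial.eval_prod]
    refine Finset.prod_ne_zero_iff.mpr (fun k _ => ?_)
    have := lne k z hz
    rw [div_eq_inv_mul] at this
    simpa using this
  · refine hF1.congr (Eventually.of_forall fun n z hz => ?_)
    simp only [Polynomial.eval_prod, Finset.prod_div_distrib, Finset.prod_const_one]
    congr 1
    refine Finset.prod_congr rfl (fun k _ => ?_)
    rw [div_eq_inv_mul]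
    simp

open Filter Topology in
/-- for every `b ∈ ℂ`, `s₀ > s₁ ≥ 0` and `ε > 0` there is an abstract Swiss
cheese `A` with `a₀ = a₁ = b`, `r₀ = s₀`, `r₁ = s₁` and `ρ_ann(A) = ∑_{n ≥ 2} r_n < ε`,
such that `R(X_A)` is regular. -/
theorem stmt_8 (b : ℂ) (s₀ s₁ : ℝ) (hs₁ : 0 ≤ s₁) (hs : s₁ < s₀) (ε : ℝ) (hε : 0 < ε) :
    ∃ A : SwissCheese, A.a 0 = b ∧ A.a 1 = b ∧ A.r 0 = s₀ ∧ A.r 1 = s₁ ∧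
      (Summable fun n => A.r (n + 2)) ∧ A.annRadSum < ε ∧
      RxRegular A.cheeseSet := by
  obtain ⟨w, hw0, hw⟩ := ENNReal.exists_pos_sum_of_countable
    (ENNReal.ofReal_pos.mpr hε).ne' (ℕ × ℕ)
  choose a R hR0 hRs q F hq hF hFz hFn using fun j : ℕ × ℕ =>
    core (TopologicalSpace.denseSeq ℂ j.1) (1 / ((j.2:ℝ) + 1)) (w j) (by positivity)
      (by exact_mod_cast hw0 j)
  let en : ℕ ≃ (ℕ × ℕ) × (ℕ × ℕ) := (Denumerable.eqv _).symm
  let A : SwissCheese :=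
    { a := fun n => match n with
        | 0 => b
        | 1 => b
        | n+2 => a (en n).1 (en n).2
      r := fun n => match n with
        | 0 => s₀
        | 1 => s₁
        | n+2 => R (en n).1 (en n).2
      r_nonneg := fun n => match n with
        | 0 => hs₁.trans hs.le
        | 1 => hs₁
        | n+2 => hR0 _ _ }
  have hAr : ∀ n, A.r (n+2) = R (en n).1 (en n).2 := fun n => rfl
  have hAa : ∀ n, A.a (n+2) = a (en n).1 (en n).2 := fun n => rfl
  have htot : ∑' n, ENNReal.ofReal (A.r (n+2)) < ENNReal.ofReal ε := by
    calc ∑' n, ENNReal.ofReal (A.r (n+2))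
        = ∑' i : (ℕ × ℕ) × (ℕ × ℕ), ENNReal.ofReal (R i.1 i.2) :=
          en.tsum_eq (fun i : (ℕ × ℕ) × (ℕ × ℕ) => ENNReal.ofReal (R i.1 i.2))
      _ = ∑' j, ∑' i, ENNReal.ofReal (R j i) := ENNReal.tsum_prod'
      _ ≤ ∑' j, (w j : ENNReal) := ENNReal.tsum_le_tsum fun j => by
          have := hRs j; rwa [ENNReal.ofReal_coe_nnreal] at this
      _ < _ := hw
  have hsum : Summable fun n => A.r (n+2) := by
    have := ENNReal.summable_toReal htot.ne_top
    refine this.congr (fun n => ENNReal.toReal_ofReal (A.r_nonneg _))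
  refine ⟨A, rfl, rfl, rfl, rfl, hsum, ?_, ?_⟩
  · rw [← ENNReal.ofReal_tsum_of_nonneg (fun n => A.r_nonneg _) hsum] at htot
    exact (ENNReal.ofReal_lt_ofReal_iff hε).mp htot
  · intro E hE x hx
    have hX : ∀ j, A.cheeseSet ⊆ {z | ∀ i, z ∉ ball (a j i) (R j i)} := by
      intro j z hz i hzi
      refine hz.2 (mem_biUnion (show en.symm (j, i) + 2 ∈ Set.Ici 1 by simp) ?_)
      rw [hAa, hAr]; simpa using hzi
    obtain ⟨δ, hδ, hball⟩ := Metric.isOpen_iff.mp hE.isOpen_compl x hx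
    obtain ⟨l, hl⟩ := exists_nat_one_div_lt (half_pos hδ)
    have hl0 : (0:ℝ) < 1 / ((l:ℝ)+1) := by positivity
    obtain ⟨m, hm⟩ := (TopologicalSpace.denseRange_denseSeq ℂ).exists_dist_lt (x:ℂ) hl0
    set j : ℕ × ℕ := (m, l)
    have hunif : TendstoUniformly (fun n (y : A.cheeseSet) => 1 / (q j n).eval (y:ℂ))
        (fun y => F j y) atTop := by
      have h1 := (hF j).mono (hX j)
      rwa [tendstoUniformlyOn_iff_tendstoUniformly_comp_coe] at h1
    let G : ℕ → C(A.cheeseSet, ℂ) := fun n =>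
      ⟨fun y => 1 / (q j n).eval (y:ℂ), by
        refine continuous_const.div ((q j n).continuous.comp continuous_subtype_val) ?_
        intro y; exact hq j n y (hX j y.2)⟩
    let H : C(A.cheeseSet, ℂ) := ⟨fun y => F j y,
      hunif.continuous (Frequently.of_forall fun n => (G n).continuous)⟩
    have hGH : Tendsto G atTop (𝓝 H) := by
      rw [ContinuousMap.tendsto_iff_tendstoUniformly]; exact hunif
    have hH : H ∈ Rx A.cheeseSet := by
      refine mem_closure_of_tendsto hGH (Eventually.of_forall fun n => ?_)
      refine Algebra.subset_adjoin ⟨1, q j n, fun y => hq j n y (hX j y.2), fun y => ?_⟩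
      simp [G]
    have hne : F j x ≠ 0 := hFn j x (hX j x.2) hm
    refine ⟨(F j x)⁻¹ • H, Subalgebra.smul_mem _ hH _, ?_, ?_⟩
    · simp [H, hne]
    · intro y hy
      have : F j y = 0 := by
        refine hFz j y (hX j y.2) ?_
        by_contra hcon
        push Not at hcon
        refine hball (a := y) ?_ hy
        rw [mem_ball, Subtype.dist_eq]
        have h1 := dist_triangle_right (y:ℂ) x (TopologicalSpace.denseSeq ℂ m)
        have h2 : dist (y:ℂ) (TopologicalSpace.denseSeq ℂ m) < 1 / ((l:ℝ)+1) := hcon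
        linarith
      simp [H, this]
end

section
/- (Annular classicalisation theorem) Let A = ((a_n, r_n)) be an annular abstract Swiss cheese with δ_ann(A) > 0. Then there exists a classical, annular abstract Swiss cheese B = ((b_n, s_n)) with b_0 = a_0 such that δ_ann(B) ≥ δ_ann(A) and X_B ⊆ X_A. -/
open Metric Set

namespace SCAux

abbrev St := ℝ × ℝ × (ℕ → ℝ) × (ℕ → ℂ)

/-- covering condition for a single disk -/
def Cov (a0 : ℂ) (z : ℂ) (ρ : ℝ) (n : ℕ) (p : St) : Prop :=
  p.1 + ρ ≤ dist z a0 ∨ dist z a0 + ρ ≤ p.2.1 ∨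
    ∃ k ∈ Set.Iic n, dist z (p.2.2.2 k) + ρ ≤ p.2.2.1 k

def Feas (a0 : ℂ) (r0 r1 δ : ℝ) (a : ℕ → ℂ) (r : ℕ → ℝ) : Set St :=
  {p | p.1 ≤ r0 ∧ r1 ≤ p.2.1 ∧ (∀ n, 0 ≤ p.2.2.1 n) ∧
    (∀ n, dist (p.2.2.2 n) a0 ≤ 2 * r0) ∧
    (∀ N, δ ≤ p.1 - p.2.1 - 2 * ∑ i ∈ Finset.range N, p.2.2.1 i) ∧
    ∀ n, 0 < r n → Cov a0 (a n) (r n) n p}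

theorem isClosed_cov (a0 z : ℂ) (ρ : ℝ) (n : ℕ) : IsClosed {p : St | Cov a0 z ρ n p} := by
  unfold Cov
  simp only [Set.ofPred_or]
  refine (isClosed_le (by fun_prop) (by fun_prop)).union
    ((isClosed_le (by fun_prop) (by fun_prop)).union ?_)
  have : {p : St | ∃ k ∈ Set.Iic n, dist z (p.2.2.2 k) + ρ ≤ p.2.2.1 k} =
      ⋃ k ∈ Set.Iic n, {p : St | dist z (p.2.2.2 k) + ρ ≤ p.2.2.1 k} := by
    ext p; simp
  rw [this]
  exact (Set.finite_Iic n).isClosed_biUnion fun k _ =>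
    isClosed_le (by fun_prop) (by fun_prop)

theorem isClosed_feas (a0 : ℂ) (r0 r1 δ : ℝ) (a : ℕ → ℂ) (r : ℕ → ℝ) :
    IsClosed (Feas a0 r0 r1 δ a r) := by
  unfold Feas
  simp only [Set.ofPred_and, Set.ofPred_forall]
  refine (isClosed_le (by fun_prop) (by fun_prop)).inter
    ((isClosed_le (by fun_prop) (by fun_prop)).inter
    ((isClosed_iInter fun n => isClosed_le (by fun_prop) (by fun_prop)).inter
    ((isClosed_iInter fun n => isClosed_le (by fun_prop) (by fun_prop)).inter
    ((isClosed_iInter fun n => isClosed_le (by fun_prop) (by fun_prop)).inter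
    (isClosed_iInter fun n => isClosed_iInter fun _ => isClosed_cov _ _ _ _)))))

theorem feas_bounds {a0 : ℂ} {r0 r1 δ : ℝ} {a : ℕ → ℂ} {r : ℕ → ℝ} (hr1 : 0 < r1) (hδ : 0 < δ)
    {p : St} (hp : p ∈ Feas a0 r0 r1 δ a r) :
    p.2.1 < p.1 ∧ Summable p.2.2.1 ∧ δ ≤ p.1 - p.2.1 - 2 * ∑' i, p.2.2.1 i ∧
    ∀ n, 2 * p.2.2.1 n ≤ r0 := by
  obtain ⟨h0, h1, ht, hc, hd, hcov⟩ := hp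
  have h00 := hd 0
  simp only [Finset.range_zero, Finset.sum_empty] at h00
  have hs : Summable p.2.2.1 := by
    refine summable_of_sum_range_le (c := (p.1 - p.2.1 - δ) / 2) ht fun n => ?_
    linarith [hd n]
  have hle : ∑' i, p.2.2.1 i ≤ (p.1 - p.2.1 - δ) / 2 :=
    Real.tsum_le_of_sum_range_le ht fun n => by linarith [hd n]
  refine ⟨by linarith, hs, by linarith, fun n => ?_⟩
  have := hs.le_tsum n (fun j _ => ht j)
  linarith

theorem isCompact_feas (a0 : ℂ) (r0 r1 δ : ℝ) (a : ℕ → ℂ) (r : ℕ → ℝ) (hr1 : 0 < r1) (hδ : 0 < δ) :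
    IsCompact (Feas a0 r0 r1 δ a r) := by
  have hK : IsCompact ((Set.Icc 0 r0) ×ˢ (Set.Icc 0 r0) ×ˢ
      (Set.pi Set.univ fun _ : ℕ => Set.Icc (0:ℝ) r0) ×ˢ
      (Set.pi Set.univ fun _ : ℕ => closedBall a0 (2 * r0))) :=
    isCompact_Icc.prod (isCompact_Icc.prod ((isCompact_univ_pi fun _ => isCompact_Icc).prod
      (isCompact_univ_pi fun _ => isCompact_closedBall _ _)))
  refine hK.of_isClosed_subset (isClosed_feas _ _ _ _ _ _) fun p hp => ?_
  obtain ⟨hlt, hs, hsum, hb⟩ := feas_bounds hr1 hδ hp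
  obtain ⟨h0, h1, ht, hc, hd, hcov⟩ := hp
  refine ⟨⟨by linarith, by linarith⟩, ⟨by linarith, by linarith⟩, fun n _ => ⟨ht n, ?_⟩,
    fun n _ => hc n⟩
  linarith [hb n]

/-- real cost -/
noncomputable def cost (r0 : ℝ) (p : St) : ℝ :=
  r0 * (p.2.1 - p.1 + r0) + ∑' i, p.2.2.1 i * (4 * r0 - p.2.2.1 i)

noncomputable def ecost (r0 : ℝ) (p : St) : ENNReal :=
  ENNReal.ofReal (r0 * (p.2.1 - p.1 + r0)) +
    ∑' i, ENNReal.ofReal (p.2.2.1 i * (4 * r0 - p.2.2.1 i))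

theorem lsc_ecost (r0 : ℝ) : LowerSemicontinuous (ecost r0) := by
  refine LowerSemicontinuous.add (Continuous.lowerSemicontinuous ?_)
    (lowerSemicontinuous_tsum fun i => Continuous.lowerSemicontinuous ?_)
  · exact ENNReal.continuous_ofReal.comp (by fun_prop)
  · exact ENNReal.continuous_ofReal.comp (by fun_prop)

theorem summable_h {r0 : ℝ} {t : ℕ → ℝ} (hs : Summable t) (h0 : ∀ n, 0 ≤ t n)
    (hb : ∀ n, 2 * t n ≤ r0) : Summable fun i => t i * (4 * r0 - t i) := by
  refine Summable.of_nonneg_of_le (fun i => mul_nonneg (h0 i) ?_) (fun i => ?_)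
    (hs.mul_right (4 * r0))
  · linarith [h0 i, hb i]
  · exact mul_le_mul_of_nonneg_left (by linarith [h0 i]) (h0 i)

theorem ecost_eq {a0 : ℂ} {r0 r1 δ : ℝ} {a : ℕ → ℂ} {r : ℕ → ℝ} (hr1 : 0 < r1) (hδ : 0 < δ)
    {p : St} (hp : p ∈ Feas a0 r0 r1 δ a r) : ecost r0 p = ENNReal.ofReal (cost r0 p) ∧
      0 ≤ cost r0 p := by
  obtain ⟨hlt, hs, hsum, hb⟩ := feas_bounds hr1 hδ hp
  obtain ⟨h0, h1, ht, hc, hd, hcov⟩ := hp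
  have hn : ∀ i, 0 ≤ p.2.2.1 i * (4 * r0 - p.2.2.1 i) := fun i =>
    mul_nonneg (ht i) (by linarith [ht i, hb i])
  have hA : 0 ≤ r0 * (p.2.1 - p.1 + r0) := mul_nonneg (by linarith) (by linarith)
  unfold ecost cost
  rw [ENNReal.ofReal_add hA (tsum_nonneg hn),
    ENNReal.ofReal_tsum_of_nonneg hn (summable_h hs ht hb)]
  exact ⟨rfl, add_nonneg hA (tsum_nonneg hn)⟩

theorem exists_min (a0 : ℂ) (r0 r1 δ : ℝ) (a : ℕ → ℂ) (r : ℕ → ℝ) (hr1 : 0 < r1) (hδ : 0 < δ)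
    (hne : (Feas a0 r0 r1 δ a r).Nonempty) :
    ∃ p ∈ Feas a0 r0 r1 δ a r, ∀ q ∈ Feas a0 r0 r1 δ a r, cost r0 p ≤ cost r0 q := by
  obtain ⟨p, hp, hmin⟩ := ((lsc_ecost r0).lowerSemicontinuousOn _).exists_isMinOn hne
    (isCompact_feas a0 r0 r1 δ a r hr1 hδ)
  refine ⟨p, hp, fun q hq => ?_⟩
  have h := hmin hq
  simp only [Set.mem_ofPred_eq] at h
  rw [(ecost_eq hr1 hδ hp).1, (ecost_eq hr1 hδ hq).1] at h
  exact (ENNReal.ofReal_le_ofReal_iff (ecost_eq hr1 hδ hq).2).1 h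

/-- constructing feasible points from total sums -/
theorem feas_mk {a0 : ℂ} {r0 r1 δ : ℝ} {a : ℕ → ℂ} {r : ℕ → ℝ} {p : St} {S : ℝ}
    (h0 : p.1 ≤ r0) (h1 : r1 ≤ p.2.1) (ht : ∀ n, 0 ≤ p.2.2.1 n)
    (hc : ∀ n, dist (p.2.2.2 n) a0 ≤ 2 * r0)
    (hS : HasSum p.2.2.1 S) (hd : δ ≤ p.1 - p.2.1 - 2 * S)
    (hcov : ∀ n, 0 < r n → Cov a0 (a n) (r n) n p) : p ∈ Feas a0 r0 r1 δ a r := by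
  refine ⟨h0, h1, ht, hc, fun N => ?_, hcov⟩
  have := sum_le_hasSum (Finset.range N) (fun i _ => ht i) hS
  linarith

theorem hasSum_h_update {r0 x S : ℝ} {t : ℕ → ℝ} (k : ℕ)
    (h : HasSum (fun i => t i * (4 * r0 - t i)) S) :
    HasSum (fun i => Function.update t k x i * (4 * r0 - Function.update t k x i))
      (x * (4 * r0 - x) - t k * (4 * r0 - t k) + S) := by
  have := h.update k (x * (4 * r0 - x))
  suffices he : Function.update (fun i => t i * (4 * r0 - t i)) k (x * (4 * r0 - x)) =
      fun i => Function.update t k x i * (4 * r0 - Function.update t k x i) by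
    rw [he] at this; exact this
  funext i
  by_cases hi : i = k
  · subst hi; simp
  · simp [hi]

section
variable {a0 : ℂ} {r0 r1 δ : ℝ} {a : ℕ → ℂ} {r : ℕ → ℝ} {p : St}

theorem min_outer (hr1 : 0 < r1) (hδ : 0 < δ) (hp : p ∈ Feas a0 r0 r1 δ a r)
    (hmin : ∀ q ∈ Feas a0 r0 r1 δ a r, cost r0 p ≤ cost r0 q) (k : ℕ) (hk : 0 < p.2.2.1 k) :
    dist (p.2.2.2 k) a0 + p.2.2.1 k < p.1 := by
  by_contra! hcon
  obtain ⟨hlt, hs, hsum, hb⟩ := feas_bounds hr1 hδ hp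
  obtain ⟨h0, h1, ht, hc, hd, hcov⟩ := hp
  obtain ⟨s0, s1, t, c⟩ := p
  simp only at *
  have hS := hs.hasSum.update k 0
  have hH := hasSum_h_update (x := 0) k (summable_h hs ht hb).hasSum
  have hq : (s0 - 2 * t k, s1, Function.update t k 0, c) ∈ Feas a0 r0 r1 δ a r := by
    refine feas_mk (by simp only; linarith) h1 (fun n => ?_) hc hS ?_ (fun n hn => ?_)
    · by_cases hi : n = k
      · subst hi; simp
      · simp [hi, ht n]
    · simp only; linarith
    · rcases hcov n hn with h | h | ⟨i, hi, h⟩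
      · left; simp only at *; linarith
      · right; left; exact h
      · simp only at *
        by_cases hik : i = k
        · subst hik
          left; simp only
          have := dist_triangle_left (c i) a0 (a n)
          linarith
        · right; right; exact ⟨i, hi, by simpa [hik] using h⟩
  have := hmin _ hq
  simp only [cost] at this
  rw [hH.tsum_eq] at this
  have hbk := hb k
  nlinarith

theorem min_inner (hr1 : 0 < r1) (hδ : 0 < δ) (hp : p ∈ Feas a0 r0 r1 δ a r)
    (hmin : ∀ q ∈ Feas a0 r0 r1 δ a r, cost r0 p ≤ cost r0 q) (k : ℕ) (hk : 0 < p.2.2.1 k) :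
    p.2.1 + p.2.2.1 k < dist (p.2.2.2 k) a0 := by
  by_contra! hcon
  obtain ⟨hlt, hs, hsum, hb⟩ := feas_bounds hr1 hδ hp
  obtain ⟨h0, h1, ht, hc, hd, hcov⟩ := hp
  obtain ⟨s0, s1, t, c⟩ := p
  simp only at *
  have hS := hs.hasSum.update k 0
  have hH := hasSum_h_update (x := 0) k (summable_h hs ht hb).hasSum
  have hq : (s0, s1 + 2 * t k, Function.update t k 0, c) ∈ Feas a0 r0 r1 δ a r := by
    refine feas_mk h0 (by simp only; linarith) (fun n => ?_) hc hS ?_ (fun n hn => ?_)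
    · by_cases hi : n = k
      · subst hi; simp
      · simp [hi, ht n]
    · simp only; linarith
    · rcases hcov n hn with h | h | ⟨i, hi, h⟩
      · left; exact h
      · right; left; simp only at *; linarith
      · simp only at *
        by_cases hik : i = k
        · subst hik
          right; left; simp only
          have := dist_triangle (a n) (c i) a0
          linarith
        · right; right; exact ⟨i, hi, by simpa [hik] using h⟩
  have := hmin _ hq
  simp only [cost] at this
  rw [hH.tsum_eq] at this
  have hbk := hb k
  nlinarith

theorem exists_centre (b c : ℂ) (s t : ℝ) (hs : 0 < s) (ht : 0 < t) (h : dist b c ≤ s + t) :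
    ∃ e ∈ segment ℝ b c, dist b e ≤ t ∧ dist c e ≤ s := by
  have hst : 0 < s + t := by linarith
  refine ⟨AffineMap.lineMap b c (t / (s + t)), ?_, ?_, ?_⟩
  · rw [segment_eq_image_lineMap]
    exact ⟨_, ⟨by positivity, by rw [div_le_one hst]; linarith⟩, rfl⟩
  · rw [dist_left_lineMap, Real.norm_of_nonneg (by positivity), div_mul_eq_mul_div, div_le_iff₀ hst]
    exact mul_le_mul_of_nonneg_left h ht.le
  · rw [dist_right_lineMap]
    have : 1 - t / (s + t) = s / (s + t) := by field_simp; ring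
    rw [this, Real.norm_of_nonneg (by positivity), div_mul_eq_mul_div, div_le_iff₀ hst]
    exact mul_le_mul_of_nonneg_left h hs.le

theorem min_pair (hr1 : 0 < r1) (hδ : 0 < δ) (hp : p ∈ Feas a0 r0 r1 δ a r)
    (hmin : ∀ q ∈ Feas a0 r0 r1 δ a r, cost r0 p ≤ cost r0 q) (k l : ℕ) (hkl : k < l)
    (hk : 0 < p.2.2.1 k) (hl : 0 < p.2.2.1 l) :
    p.2.2.1 k + p.2.2.1 l < dist (p.2.2.2 k) (p.2.2.2 l) := by
  by_contra! hcon
  obtain ⟨hlt, hs, hsum, hb⟩ := feas_bounds hr1 hδ hp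
  obtain ⟨h0, h1, ht, hc, hd, hcov⟩ := hp
  obtain ⟨s0, s1, t, c⟩ := p
  simp only at *
  obtain ⟨e, he, hek, hel⟩ := exists_centre _ _ _ _ hk hl hcon
  have hS := (hs.hasSum.update l 0).update k (t k + t l)
  have hH := hasSum_h_update (x := t k + t l) k
    (hasSum_h_update (x := 0) l (summable_h hs ht hb).hasSum)
  have hne : k ≠ l := hkl.ne
  simp only [Function.update_of_ne hne] at hS hH
  have hq : (s0, s1, Function.update (Function.update t l 0) k (t k + t l),
      Function.update c k e) ∈ Feas a0 r0 r1 δ a r := by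
    refine feas_mk h0 h1 (fun n => ?_) (fun n => ?_) hS ?_ (fun n hn => ?_)
    · by_cases hi : n = k
      · subst hi; simp; linarith
      · by_cases hi' : n = l
        · subst hi'; simp [hi]
        · simp [hi, hi', ht n]
    · by_cases hi : n = k
      · subst hi
        simp only [Function.update_self]
        exact (convex_closedBall a0 (2 * r0)).segment_subset (hc n) (hc l) he
      · simpa [hi] using hc n
    · simp only; linarith
    · rcases hcov n hn with h | h | ⟨i, hi, h⟩
      · left; exact h
      · right; left; exact h
      · simp only at *
        right; right
        by_cases hik : i = k
        · subst hik
          refine ⟨i, hi, ?_⟩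
          simp only [Function.update_self]
          linarith [dist_triangle (a n) (c i) e]
        · by_cases hil : i = l
          · subst hil
            refine ⟨k, hkl.le.trans hi, ?_⟩
            simp only [Function.update_self]
            linarith [dist_triangle (a n) (c i) e]
          · exact ⟨i, hi, by simpa [hik, hil] using h⟩
  have := hmin _ hq
  simp only [cost] at this
  rw [hH.tsum_eq] at this
  have := mul_pos hk hl
  nlinarith

end

theorem feas_nonempty (a0 : ℂ) (r0 r1 : ℝ) (a : ℕ → ℂ) (r : ℕ → ℝ) (hr1 : 0 < r1)
    (hr : ∀ n, 0 ≤ r n) (hs : Summable r) (hpos : 0 < r0 - r1 - 2 * ∑' i, r i) :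
    (Feas a0 r0 r1 (r0 - r1 - 2 * ∑' i, r i) a r).Nonempty := by
  classical
  have hsum0 : 0 ≤ ∑' i, r i := tsum_nonneg hr
  let t : ℕ → ℝ := fun n => if r0 + r n ≤ dist (a n) a0 then 0 else r n
  let c : ℕ → ℂ := fun n => if r0 + r n ≤ dist (a n) a0 then a0 else a n
  have ht0 : ∀ n, 0 ≤ t n := fun n => by
    by_cases h : r0 + r n ≤ dist (a n) a0 <;> simp [t, h, hr n]
  have htr : ∀ n, t n ≤ r n := fun n => by
    by_cases h : r0 + r n ≤ dist (a n) a0 <;> simp [t, h, hr n]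
  have hts : Summable t := Summable.of_nonneg_of_le ht0 htr hs
  refine ⟨(r0, r1, t, c), feas_mk le_rfl le_rfl ht0 (fun n => ?_) hts.hasSum ?_ fun n hn => ?_⟩
  · by_cases h : r0 + r n ≤ dist (a n) a0
    · simp only [c, h, if_true, dist_self]; linarith
    · simp only [c, h, if_false]
      have := hs.le_tsum n (fun j _ => hr j)
      linarith
  · have := hts.tsum_le_tsum htr hs
    simp only; linarith
  · by_cases h : r0 + r n ≤ dist (a n) a0
    · left; exact h
    · right; right; exact ⟨n, Set.mem_Iic.2 le_rfl, by simp [t, c, h]⟩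

end SCAux

/-- Annular classicalisation theorem: if `A` is annular with `δ_ann(A) > 0`
(in particular `∑_{n ≥ 2} r_n < ∞`), then there is a classical, annular abstract Swiss
cheese `B` with `b₀ = a₀`, `δ_ann(B) ≥ δ_ann(A)` and `X_B ⊆ X_A`. -/
theorem stmt_10 (A : SwissCheese) (hann : A.IsAnnular)
    (hsum : Summable fun n => A.r (n + 2)) (hpos : 0 < A.annDisc) :
    ∃ B : SwissCheese, B.IsClassical ∧ B.IsAnnular ∧ B.a 0 = A.a 0 ∧
      A.annDisc ≤ B.annDisc ∧ B.cheeseSet ⊆ A.cheeseSet := by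
  obtain ⟨ha01, hr01, hr1⟩ := hann
  have hne := SCAux.feas_nonempty (A.a 0) (A.r 0) (A.r 1) (fun n => A.a (n + 2))
    (fun n => A.r (n + 2)) hr1 (fun n => A.r_nonneg _) hsum hpos
  obtain ⟨p, hp, hmin⟩ := SCAux.exists_min _ _ _ _ _ _ hr1 hpos hne
  have hout := SCAux.min_outer hr1 hpos hp hmin
  have hin := SCAux.min_inner hr1 hpos hp hmin
  have hpair := SCAux.min_pair hr1 hpos hp hmin
  obtain ⟨hlt, hs, hS, hb⟩ := SCAux.feas_bounds hr1 hpos hp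
  obtain ⟨h0, h1, ht, hc, hd, hcov⟩ := hp
  obtain ⟨s0, s1, t, c⟩ := p
  simp only at *
  let B : SwissCheese :=
    { a := fun n => match n with
        | 0 => A.a 0
        | 1 => A.a 0
        | n + 2 => c n
      r := fun n => match n with
        | 0 => s0
        | 1 => s1
        | n + 2 => t n
      r_nonneg := fun n => match n with
        | 0 => by simp only; linarith
        | 1 => by simp only; linarith
        | n + 2 => ht n }
  have hdisj : ∀ k l, k < l → k ∈ B.sig → l ∈ B.sig →
      closedBall (B.a k) (B.r k) ∩ closedBall (B.a l) (B.r l) = ∅ := by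
    intro k l hkl hk hl
    refine Set.disjoint_iff_inter_eq_empty.1 (closedBall_disjoint_closedBall ?_)
    match k, l, hkl, hk, hl with
    | 0, _, _, hk, _ => exact absurd hk.1 (by norm_num)
    | 1, 0, h, _, _ => omega
    | 1, 1, h, _, _ => omega
    | 1, l + 2, _, _, hl =>
      have := hin l hl.2
      rw [dist_comm] at this
      exact this
    | k + 2, 0, h, _, _ => omega
    | k + 2, 1, h, _, _ => omega
    | k + 2, l + 2, h, hk, hl => exact hpair k l (by omega) hk.2 hl.2
  refine ⟨B, ⟨?_, ?_, fun k hk => ⟨?_, fun l hl hlk => ?_⟩⟩, ⟨rfl, hlt, ?_⟩, rfl, hS, ?_⟩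
  · exact (summable_nat_add_iff (f := fun n => B.r (n + 1)) 1).1 hs
  · show 0 < s0
    linarith
  · refine closedBall_subset_ball' ?_
    match k, hk with
    | 0, hk => exact absurd hk.1 (by norm_num)
    | 1, _ =>
      show s1 + dist (A.a 0) (A.a 0) < s0
      simpa using hlt
    | k + 2, hk =>
      show t k + dist (c k) (A.a 0) < s0
      linarith [hout k hk.2]
  · rcases lt_or_gt_of_ne hlk with h | h
    · rw [Set.inter_comm]; exact hdisj l k h hl hk
    · exact hdisj k l h hk hl
  · show 0 < s1
    linarith
  · rintro x ⟨hx0, hx⟩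
    simp only [Set.mem_iUnion, not_exists] at hx
    have hx0' : dist x (A.a 0) ≤ s0 := hx0
    refine ⟨hx0'.trans h0, ?_⟩
    simp only [Set.mem_iUnion, not_exists]
    intro n hn hxn
    have hx1 : ¬ dist x (A.a 0) < s1 := hx 1 (Set.mem_Ici.2 le_rfl)
    match n, hn, hxn with
    | 0, hn, _ => exact absurd (Set.mem_Ici.1 hn) (by norm_num)
    | 1, _, hxn =>
      rw [← ha01, mem_ball] at hxn
      linarith
    | n + 2, _, hxn =>
      rw [mem_ball] at hxn
      rcases hcov n (dist_nonneg.trans_lt hxn) with h | h | ⟨k, _, h⟩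
      · have := dist_triangle_left (A.a (n + 2)) (A.a 0) x
        simp only at h; linarith
      · have := dist_triangle x (A.a (n + 2)) (A.a 0)
        simp only at h; linarith
      · refine hx (k + 2) (Set.mem_Ici.2 (by omega)) ?_
        show dist x (c k) < t k
        have := dist_triangle x (A.a (n + 2)) (c k)
        simp only at h; linarith
end
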